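/- arXiv:1604.01101 — 4 statements merged into one kernel-verified Lean document; each statement's English description precedes it below -/
import Mathlib

section
/- Let λ be a hook partition (a, 1^b) of n that contains (2,1,1) (i.e., a ≥ 2 and b ≥ 2). If φ : S^λ → R_d is a nonzero S_n-equivariant map and I is the ideal generated by the image of φ, then I is not a complete intersection. -/
open MvPolynomial

noncomputable section

/-- An ideal is a complete intersection if it is generated by a regular sequence. -/
def IsCompleteIntersection {A : Type*} [CommRing A] (I : Ideal A) : Prop :=
  ∃ rs : List A, RingTheory.Sequence.IsRegular A rs ∧ Ideal.span {r | r ∈ rs} = I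

/-- The Specht polynomial of a Young tableau `T` of shape `l = (λ_1,…,λ_r)`:
the product, over all pairs of boxes lying in the same column, of the
differences of the corresponding variables. -/
def spechtPoly (k : Type*) [Field k] {n : ℕ} (l : List ℕ)
    (T : (Σ i : Fin l.length, Fin (l.get i)) ≃ Fin n) : MvPolynomial (Fin n) k :=
  ∏ p ∈ Finset.univ.filter
      (fun p : (Σ i : Fin l.length, Fin (l.get i)) × (Σ i : Fin l.length, Fin (l.get i)) =>
        (p.1.2 : ℕ) = (p.2.2 : ℕ) ∧ p.1.1 < p.2.1),
    (X (T p.1) - X (T p.2))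

/-- The Specht module `S^λ`, realized inside `k[x_1,…,x_n]` as the span of the
Specht polynomials of all Young tableaux of shape `λ`. -/
def SpechtModule (k : Type*) [Field k] (n : ℕ) (l : List ℕ) :
    Submodule k (MvPolynomial (Fin n) k) :=
  Submodule.span k (Set.range (spechtPoly k (n := n) l))


theorem regular_length_le_height {A : Type*} [CommRing A] [IsNoetherianRing A] (p : Ideal A)
    [p.IsPrime] (rs : List A) (hreg : RingTheory.Sequence.IsRegular A rs)
    (hmem : ∀ r ∈ rs, r ∈ p) : (rs.length : ℕ∞) ≤ p.height := by
  have h1 := hreg.1.isRegular_of_isLocalization_of_mem (Localization.AtPrime p) p hmem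
  have h2 := ringKrullDim_add_length_eq_ringKrullDim_of_isRegular _ h1
  rw [IsLocalization.AtPrime.ringKrullDim_eq_height p (Localization.AtPrime p)] at h2
  have h3 : Nontrivial (Localization.AtPrime p ⧸
      Ideal.ofList (rs.map (algebraMap A (Localization.AtPrime p)))) := by
    apply Ideal.Quotient.nontrivial_iff.mpr
    intro h
    apply h1.2
    simp [h]
  have h4 := ringKrullDim_nonneg_of_nontrivial (R := (Localization.AtPrime p ⧸
      Ideal.ofList (rs.map (algebraMap A (Localization.AtPrime p)))))
  rw [List.length_map] at h2
  have h5 : ((rs.length : ℕ∞) : WithBot ℕ∞) ≤ (p.height : WithBot ℕ∞) := by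
    rw [← h2]
    exact le_add_of_nonneg_left h4
  exact WithBot.coe_le_coe.mp h5

def mergeMap {n : ℕ} (S : Finset (Fin n)) (m : Fin n) (i : Fin n) : Fin n :=
  if i ∈ S then m else i

theorem height_ker_merge_le {k : Type*} [Field k] {n : ℕ} (S : Finset (Fin n)) (m : Fin n)
    (hm : m ∉ S) :
    (RingHom.ker (rename (R := k) (mergeMap S m))).height ≤ S.card := by
  classical
  set J : Ideal (MvPolynomial (Fin n) k) :=
    Ideal.span ((S.image (fun i => (X i - X m : MvPolynomial (Fin n) k)) : Finset _) : Set _)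
    with hJ
  have key : ∀ f : MvPolynomial (Fin n) k, f - rename (mergeMap S m) f ∈ J := by
    intro f
    have : (Ideal.Quotient.mkₐ k J) =
        (Ideal.Quotient.mkₐ k J).comp (rename (mergeMap S m)) := by
      apply MvPolynomial.algHom_ext
      intro i
      simp only [AlgHom.comp_apply, rename_X, Ideal.Quotient.mkₐ_eq_mk]
      rw [Ideal.Quotient.eq]
      unfold mergeMap
      split_ifs with h
      · apply Ideal.subset_span
        simp only [Finset.coe_image, Set.mem_image, Finset.mem_coe]
        exact ⟨i, h, rfl⟩
      · simp
    have h2 := DFunLike.congr_fun this f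
    simp only [AlgHom.comp_apply, Ideal.Quotient.mkₐ_eq_mk] at h2
    exact (Ideal.Quotient.eq).mp h2
  have hEq : RingHom.ker (rename (R := k) (mergeMap S m)) = J := by
    apply le_antisymm
    · intro f hf
      have := key f
      rw [RingHom.mem_ker] at hf
      simpa [hf] using this
    · rw [hJ, Ideal.span_le]
      intro f hf
      simp only [Finset.coe_image, Set.mem_image, Finset.mem_coe] at hf
      obtain ⟨i, hi, rfl⟩ := hf
      simp [mergeMap, hi, hm]
  have hp : (RingHom.ker (rename (R := k) (mergeMap S m))).IsPrime := RingHom.ker_isPrime _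
  have h1 : (RingHom.ker (rename (R := k) (mergeMap S m))) ∈ J.minimalPrimes := by
    rw [← hEq]
    rw [Ideal.minimalPrimes_eq_subsingleton_self]
    rfl
  refine (Ideal.height_le_card_of_mem_minimalPrimes_span_finset h1).trans ?_
  exact_mod_cast Finset.card_image_le

theorem finrank_le_of_span_eq {k : Type*} [Field k] {n : ℕ} (d : ℕ)
    (V : Submodule k (MvPolynomial (Fin n) k)) (hV : V ≤ homogeneousSubmodule (Fin n) k d)
    (rs : List (MvPolynomial (Fin n) k))
    (h : Ideal.span {r | r ∈ rs} = Ideal.span (V : Set (MvPolynomial (Fin n) k))) :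
    Module.finrank k V ≤ rs.length := by
  classical
  have low : ∀ f ∈ Ideal.span (V : Set (MvPolynomial (Fin n) k)), ∀ m : Fin n →₀ ℕ,
      m.degree < d → coeff m f = 0 := by
    intro f hf
    induction hf using Submodule.span_induction with
    | mem x hx =>
      intro m hm
      have := hV hx
      rw [mem_homogeneousSubmodule] at this
      exact this.coeff_eq_zero (by omega)
    | zero => simp
    | add x y _ _ hx hy =>
      intro m hm
      simp [hx m hm, hy m hm]
    | smul a x hx0 hx =>
      intro m hm
      rw [smul_eq_mul, coeff_mul]
      apply Finset.sum_eq_zero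
      intro p hp
      rw [Finset.HasAntidiagonal.mem_antidiagonal] at hp
      have : p.1.degree + p.2.degree = m.degree := by rw [← hp, map_add]
      rw [hx p.2 (by omega), mul_zero]
  have hmul : ∀ a, ∀ f ∈ Ideal.span (V : Set (MvPolynomial (Fin n) k)),
      homogeneousComponent d (a * f) = coeff 0 a • homogeneousComponent d f := by
    intro a f hf
    ext m
    rw [coeff_smul, coeff_homogeneousComponent, coeff_homogeneousComponent]
    split_ifs with hm
    · rw [coeff_mul, Finset.sum_eq_single (0, m)]
      · rfl
      · intro p hp hne
        rw [Finset.HasAntidiagonal.mem_antidiagonal] at hp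
        have h1 : p.1.degree + p.2.degree = m.degree := by rw [← hp, map_add]
        by_cases h0 : p.1.degree = 0
        · rw [Finsupp.degree_eq_zero_iff] at h0
          exfalso
          apply hne
          ext1
          · exact h0
          · simpa [h0] using hp
        · rw [low f hf p.2 (by omega), mul_zero]
      · simp
    · simp
  set W : Submodule k (MvPolynomial (Fin n) k) :=
    Submodule.span k ((rs.map (homogeneousComponent d)).toFinset : Set _) with hW
  have hVW : V ≤ W := by
    have h2 : ∀ f ∈ Ideal.span {r | r ∈ rs}, homogeneousComponent d f ∈ W := by
      intro f hf
      induction hf using Submodule.span_induction with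
      | mem x hx =>
        apply Submodule.subset_span
        simp only [List.coe_toFinset, List.mem_map, Set.mem_ofPred_eq]
        exact ⟨x, hx, rfl⟩
      | zero => simp
      | add x y _ _ hx hy =>
        rw [map_add]
        exact W.add_mem hx hy
      | smul a x hx0 hx =>
        rw [smul_eq_mul, hmul a x (h ▸ hx0)]
        exact W.smul_mem _ hx
    intro v hv
    have h3 := h2 v (h ▸ Ideal.subset_span hv)
    rwa [homogeneousComponent_eq_self ((mem_homogeneousSubmodule _ _).mp (hV hv))] at h3
  calc Module.finrank k V ≤ Module.finrank k W := Submodule.finrank_mono hVW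
    _ ≤ (rs.map (homogeneousComponent d)).toFinset.card := finrank_span_finset_le_card _
    _ ≤ (rs.map (homogeneousComponent d)).length := List.toFinset_card_le _
    _ = rs.length := List.length_map _

/-- Vandermonde polynomial in the variables indexed by a tuple `t`. -/
def vdm (k : Type*) [Field k] {n m : ℕ} (t : Fin m → Fin n) : MvPolynomial (Fin n) k :=
  (Matrix.vandermonde (fun i => -X (t i))).det

theorem rename_vdm {k : Type*} [Field k] {n m : ℕ} (σ : Fin n → Fin n) (t : Fin m → Fin n) :
    rename σ (vdm k t) = vdm k (σ ∘ t) := by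
  unfold vdm
  rw [AlgHom.map_det]
  congr 1
  ext i j
  simp [Matrix.vandermonde_apply]

theorem vdm_comp_perm {k : Type*} [Field k] {n m : ℕ} (t : Fin m → Fin n)
    (σ : Equiv.Perm (Fin m)) :
    vdm k (t ∘ σ) = ((Equiv.Perm.sign σ : ℤ) : k) • vdm k t := by
  unfold vdm
  have := Matrix.det_permute σ (Matrix.vandermonde (fun i => (-X (t i) : MvPolynomial (Fin n) k)))
  rw [Algebra.smul_def]
  rw [map_intCast, ← this]
  rfl

theorem vdm_garnir {k : Type*} [Field k] {n m : ℕ} (t : Fin (m + 1) → Fin n) (x : Fin n) :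
    ∑ j, vdm k (Function.update t j x) = vdm k t := by
  set M := Matrix.vandermonde (fun i => (-X (t i) : MvPolynomial (Fin n) k)) with hM
  set r : Fin (m + 1) → MvPolynomial (Fin n) k := fun j => (-X x) ^ (j : ℕ) with hr
  have h1 : ∀ j, vdm k (Function.update t j x) = (M.transpose.cramer r) j := by
    intro j
    rw [Matrix.cramer_transpose_apply]
    unfold vdm
    congr 1
    ext i l
    by_cases h : i = j
    · subst h
      simp [Matrix.vandermonde_apply, hr]
    · simp [Matrix.vandermonde_apply, hM, h]
  simp_rw [h1]
  have h2 : M.mulVec (Pi.single 0 1) = 1 := by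
    ext i
    simp [hM, Matrix.vandermonde_apply]
  have h3 : ∑ j, (M.transpose.cramer r) j = (1 : Fin (m + 1) → MvPolynomial (Fin n) k) ⬝ᵥ M.transpose.cramer r := by
    simp [dotProduct]
  rw [h3, ← h2, Matrix.cramer_eq_adjugate_mulVec, ← Matrix.adjugate_transpose,
    Matrix.mulVec_transpose, dotProduct_comm, ← Matrix.dotProduct_mulVec, Matrix.mulVec_mulVec,
    Matrix.adjugate_mul]
  rw [Matrix.smul_mulVec, Matrix.one_mulVec, dotProduct_smul, dotProduct_single]
  simp [hr, vdm, hM]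

/-- Column antisymmetrizer attached to a tuple. -/
def antisym (k : Type*) [Field k] {n m : ℕ} (t : Fin m ↪ Fin n) :
    MvPolynomial (Fin n) k →ₗ[k] MvPolynomial (Fin n) k :=
  ∑ σ : Equiv.Perm (Fin m), ((Equiv.Perm.sign σ : ℤ) : k) •
    (rename (R := k) (Equiv.Perm.viaEmbeddingHom t σ)).toLinearMap

theorem antisym_apply {k : Type*} [Field k] {n m : ℕ} (t : Fin m ↪ Fin n)
    (w : MvPolynomial (Fin n) k) :
    antisym k t w = ∑ σ : Equiv.Perm (Fin m), ((Equiv.Perm.sign σ : ℤ) : k) •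
      rename (R := k) (Equiv.Perm.viaEmbeddingHom t σ) w := by
  simp [antisym]

theorem via_comp {n m : ℕ} (t : Fin m ↪ Fin n) (σ : Equiv.Perm (Fin m)) :
    (Equiv.Perm.viaEmbeddingHom t σ : Fin n → Fin n) ∘ t = t ∘ σ := by
  ext i
  simp [Equiv.Perm.viaEmbeddingHom_apply, Equiv.Perm.viaEmbedding_apply]

theorem sgn_sq {k : Type*} [Field k] {m : ℕ} (σ : Equiv.Perm (Fin m)) :
    ((Equiv.Perm.sign σ : ℤ) : k) * ((Equiv.Perm.sign σ : ℤ) : k) = 1 := by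
  rcases Int.units_eq_one_or (Equiv.Perm.sign σ) with h | h <;> simp [h]

theorem antisym_of_alt {k : Type*} [Field k] {n m : ℕ} (t : Fin m ↪ Fin n)
    (w : MvPolynomial (Fin n) k)
    (hw : ∀ σ : Equiv.Perm (Fin m), rename (R := k) (Equiv.Perm.viaEmbeddingHom t σ) w =
      ((Equiv.Perm.sign σ : ℤ) : k) • w) :
    antisym k t w = (m.factorial : k) • w := by
  rw [antisym_apply]
  simp_rw [hw, smul_smul, sgn_sq]
  simp [Fintype.card_perm, Nat.cast_smul_eq_nsmul]

theorem vdm_alt {k : Type*} [Field k] {n m : ℕ} (t : Fin m ↪ Fin n) 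
    (σ : Equiv.Perm (Fin m)) :
    rename (R := k) (Equiv.Perm.viaEmbeddingHom t σ) (vdm k t) =
      ((Equiv.Perm.sign σ : ℤ) : k) • vdm k t := by
  rw [rename_vdm, via_comp, vdm_comp_perm]

/-- antisymmetrizer absorbs column permutations up to sign -/
theorem antisym_rename {k : Type*} [Field k] {n m : ℕ} (t : Fin m ↪ Fin n)
    (τ : Equiv.Perm (Fin m)) (w : MvPolynomial (Fin n) k) :
    antisym k t (rename (Equiv.Perm.viaEmbeddingHom t τ) w) =
      ((Equiv.Perm.sign τ : ℤ) : k) • antisym k t w := by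
  rw [antisym_apply, antisym_apply, Finset.smul_sum]
  rw [← Equiv.sum_comp (Equiv.mulRight τ⁻¹)]
  refine Finset.sum_congr rfl fun σ _ => ?_
  rw [rename_rename, smul_smul]
  congr 1
  · simp [mul_comm]
  · have : ((Equiv.Perm.viaEmbeddingHom t (Equiv.mulRight τ⁻¹ σ) : Equiv.Perm (Fin n)) : Fin n → Fin n) ∘
      (Equiv.Perm.viaEmbeddingHom t τ : Equiv.Perm (Fin n)) = Equiv.Perm.viaEmbeddingHom t σ := by
      rw [← Equiv.Perm.coe_mul, ← map_mul]
      simp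
    rw [this]

theorem antisym_vdm_mem {k : Type*} [Field k] [CharZero k] {n m : ℕ}
    (t s : Fin (m + 1) ↪ Fin n) :
    ∃ c : k, antisym k t (vdm k s) = c • vdm k t := by
  classical
  by_cases h : ∃ i j, i ≠ j ∧ t i ∉ Set.range s ∧ t j ∉ Set.range s
  · obtain ⟨i, j, hij, hi, hj⟩ := h
    have h1 := antisym_rename t (Equiv.swap i j) (vdm k s)
    have h2 : rename (R := k) (Equiv.Perm.viaEmbeddingHom t (Equiv.swap i j)) (vdm k s)
        = vdm k s := by
      rw [rename_vdm]
      congr 1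
      ext l
      simp only [Function.comp_apply, Equiv.Perm.viaEmbeddingHom_apply]
      by_cases hl : s l ∈ Set.range t
      · obtain ⟨p, hp⟩ := hl
        rw [← hp, Equiv.Perm.viaEmbedding_apply, Equiv.swap_apply_of_ne_of_ne]
        · rintro rfl
          exact hi ⟨l, hp.symm⟩
        · rintro rfl
          exact hj ⟨l, hp.symm⟩
      · rw [Equiv.Perm.viaEmbedding_apply_of_notMem _ _ _ hl]
    rw [h2, Equiv.Perm.sign_swap hij] at h1
    refine ⟨0, ?_⟩
    rw [zero_smul]
    simp only [Units.val_neg, Units.val_one, Int.cast_neg, Int.cast_one, neg_smul, one_smul] at h1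
    exact self_eq_neg.mp h1
  · have hj : ∃ j, ∀ i, i ≠ j → t i ∈ Set.range s := by
      by_cases h0 : ∃ j, t j ∉ Set.range s
      · obtain ⟨j, hj⟩ := h0
        refine ⟨j, fun i hij => ?_⟩
        by_contra hi
        exact h ⟨i, j, hij, hi, hj⟩
      · push Not at h0
        exact ⟨0, fun i _ => h0 i⟩
    obtain ⟨j, hj⟩ := hj
    obtain ⟨g, hg⟩ := Finset.exists_equiv_extend_of_card_eq (α := Fin (m + 1))
      (t := Finset.univ.map s) (by simp) (s := Finset.univ.erase j) (f := t)
      (by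
        intro y hy
        simp only [Finset.mem_image, Finset.mem_erase, Finset.mem_univ, and_true] at hy
        obtain ⟨i, hi, rfl⟩ := hy
        simpa using hj i hi) t.injective.injOn
    -- `s` composed with a permutation is an update of `t`
    have hgs : ∀ i, ∃ l, s l = g i := by
      intro i
      obtain ⟨l, _, hl⟩ := Finset.mem_map.mp (g i).2
      exact ⟨l, hl⟩
    choose p hp using hgs
    have hpinj : Function.Injective p := by
      intro a b hab
      apply g.injective
      apply Subtype.ext
      rw [← hp, ← hp, hab]
    let π : Equiv.Perm (Fin (m + 1)) :=
      Equiv.ofBijective p (Finite.injective_iff_bijective.mp hpinj)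
    have hπ : s ∘ π = Function.update t j (g j) := by
      ext i
      by_cases hi : i = j
      · subst hi
        simp [π, hp]
      · have := hg i (by simp [hi])
        simp [π, hp, hi, this]
    set x : Fin n := (g j : Fin n) with hx
    have hs : vdm k s = ((Equiv.Perm.sign π : ℤ) : k) • vdm k (Function.update t j x) := by
      rw [← hπ, vdm_comp_perm, smul_smul, sgn_sq, one_smul]
    have hmain : ∃ c : k, antisym k t (vdm k (Function.update t j x)) = c • vdm k t := by
      by_cases hxt : x ∈ Set.range t
      · obtain ⟨l, hl⟩ := hxt
        have hlj : l = j := by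
          by_contra hne
          have h1 := hg l (by simp [hne])
          have h2 : g l = g j := Subtype.ext (by rw [h1, hl])
          exact hne (g.injective h2)
        subst hlj
        refine ⟨((m + 1).factorial : k), ?_⟩
        rw [← hl, Function.update_eq_self]
        exact antisym_of_alt t _ (vdm_alt t)
      · have hind : ∀ i, antisym k t (vdm k (Function.update t i x)) =
            antisym k t (vdm k (Function.update t j x)) := by
          intro i
          by_cases hij : i = j
          · rw [hij]
          have h1 := antisym_rename t (Equiv.swap i j) (vdm k (Function.update t j x))
          have h2 : (Equiv.Perm.viaEmbeddingHom t (Equiv.swap i j) : Fin n → Fin n) ∘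
              (Function.update t j x) = (Function.update t i x) ∘ (Equiv.swap i j) := by
            ext l
            simp only [Function.comp_apply, Equiv.Perm.viaEmbeddingHom_apply]
            by_cases hlj : l = j
            · subst hlj
              simp [Equiv.Perm.viaEmbedding_apply_of_notMem _ _ _ hxt]
            · rw [Function.update_of_ne hlj, Equiv.Perm.viaEmbedding_apply,
                Function.update_of_ne]
              intro h3
              apply hlj
              rw [← (Equiv.swap i j).injective.eq_iff, h3, Equiv.swap_apply_right]
          rw [rename_vdm, h2, vdm_comp_perm, map_smul] at h1
          have h3 : ((Equiv.Perm.sign (Equiv.swap i j) : ℤ) : k) ≠ 0 := by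
            intro h0
            have := sgn_sq (k := k) (Equiv.swap i j)
            rw [h0] at this
            simp at this
          exact smul_right_injective _ h3 h1
        have hsum := congrArg (antisym k t) (vdm_garnir (k := k) t x)
        rw [map_sum, Finset.sum_congr rfl (fun i _ => hind i),
          antisym_of_alt t _ (vdm_alt t)] at hsum
        simp only [Finset.sum_const, Finset.card_univ, Fintype.card_fin] at hsum
        have hne : ((m + 1 : ℕ) : k) ≠ 0 := by exact_mod_cast Nat.succ_ne_zero m
        refine ⟨((m + 1 : ℕ) : k)⁻¹ * ((m + 1).factorial : k), ?_⟩
        rw [mul_smul, ← hsum, ← Nat.cast_smul_eq_nsmul k, smul_smul, inv_mul_cancel₀ hne, one_smul]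
    obtain ⟨c, hc⟩ := hmain
    refine ⟨((Equiv.Perm.sign π : ℤ) : k) * c, ?_⟩
    rw [hs, map_smul, hc, smul_smul]

/-- Span of all Vandermonde polynomials of injective tuples. -/
def vdmSpan (k : Type*) [Field k] (n m : ℕ) : Submodule k (MvPolynomial (Fin n) k) :=
  Submodule.span k (Set.range (fun t : Fin m ↪ Fin n => vdm k t))

theorem antisym_span_mem {k : Type*} [Field k] [CharZero k] {n m : ℕ}
    (t : Fin (m + 1) ↪ Fin n) (w : MvPolynomial (Fin n) k) (hw : w ∈ vdmSpan k n (m + 1)) :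
    ∃ c : k, antisym k t w = c • vdm k t := by
  have h : vdmSpan k n (m + 1) ≤ (Submodule.span k {vdm k t}).comap (antisym k t) := by
    unfold vdmSpan
    rw [Submodule.span_le]
    rintro _ ⟨s, rfl⟩
    obtain ⟨c, hc⟩ := antisym_vdm_mem (k := k) t s
    exact Submodule.mem_span_singleton.mpr ⟨c, hc.symm⟩
  obtain ⟨c, hc⟩ := Submodule.mem_span_singleton.mp (h hw)
  exact ⟨c, hc.symm⟩

theorem exists_perm_emb {n m : ℕ} (t s : Fin m ↪ Fin n) :
    ∃ σ : Equiv.Perm (Fin n), σ ∘ t = s := by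
  classical
  obtain ⟨σ, hσ⟩ := Equiv.Perm.exists_extending_pair t s t.injective s.injective
  exact ⟨σ, funext hσ⟩

theorem vdmSpan_irred {k : Type*} [Field k] [CharZero k] {n m : ℕ}
    (K : Submodule k (MvPolynomial (Fin n) k)) (hK : K ≤ vdmSpan k n (m + 1))
    (hinv : ∀ σ : Equiv.Perm (Fin n), ∀ w ∈ K, rename σ w ∈ K) :
    K = ⊥ ∨ vdmSpan k n (m + 1) ≤ K := by
  classical
  obtain ⟨p, hp⟩ := LinearMap.exists_leftInverse_of_injective K.subtype K.ker_subtype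
  have hpK : ∀ w (hw : w ∈ K), ((p w : K) : MvPolynomial (Fin n) k) = w := by
    intro w hw
    have := LinearMap.congr_fun hp ⟨w, hw⟩
    simp only [LinearMap.comp_apply, Submodule.subtype_apply, LinearMap.id_apply] at this
    rw [this]
  let P : MvPolynomial (Fin n) k →ₗ[k] MvPolynomial (Fin n) k :=
    ∑ σ : Equiv.Perm (Fin n), (rename (R := k) σ).toLinearMap ∘ₗ K.subtype ∘ₗ p ∘ₗ
      (rename (R := k) (σ⁻¹ : Equiv.Perm (Fin n))).toLinearMap
  have hP : ∀ w, P w = ∑ σ : Equiv.Perm (Fin n),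
      rename σ ((p (rename (σ⁻¹ : Equiv.Perm (Fin n)) w) : K) : MvPolynomial (Fin n) k) := by
    intro w
    simp [P]
  have hPK : ∀ w, P w ∈ K := by
    intro w
    rw [hP]
    exact K.sum_mem fun σ _ => hinv σ _ (p _).2
  have hren : ∀ (σ τ : Equiv.Perm (Fin n)) (w : MvPolynomial (Fin n) k),
      rename σ (rename τ w) = rename ((σ * τ : Equiv.Perm (Fin n))) w := by
    intro σ τ w
    rw [rename_rename, Equiv.Perm.coe_mul]
  have hPid : ∀ w ∈ K, P w = (n.factorial : k) • w := by
    intro w hw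
    rw [hP]
    have : ∀ σ : Equiv.Perm (Fin n), rename σ
        ((p (rename (σ⁻¹ : Equiv.Perm (Fin n)) w) : K) : MvPolynomial (Fin n) k) = w := by
      intro σ
      rw [hpK _ (hinv _ _ hw), hren, mul_inv_cancel, Equiv.Perm.coe_one, rename_id_apply]
    simp_rw [this]
    simp [Fintype.card_perm, Nat.cast_smul_eq_nsmul]
  have hcomm : ∀ (τ : Equiv.Perm (Fin n)) w, P (rename τ w) = rename τ (P w) := by
    intro τ w
    rw [hP, hP, map_sum, ← Equiv.sum_comp (Equiv.mulLeft τ)]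
    refine Finset.sum_congr rfl fun σ _ => ?_
    rw [hren, hren]
    simp [mul_assoc]
  rcases isEmpty_or_nonempty (Fin (m + 1) ↪ Fin n) with he | ⟨⟨t⟩⟩
  · right
    unfold vdmSpan
    rw [Set.range_eq_empty, Submodule.span_empty]
    exact bot_le
  have h1 : antisym k t (P (vdm k t)) = ((m + 1).factorial : k) • P (vdm k t) := by
    apply antisym_of_alt
    intro σ
    rw [← hcomm, vdm_alt, map_smul]
  obtain ⟨c, hc⟩ := antisym_span_mem t _ (hK (hPK (vdm k t)))
  have hf : ((m + 1).factorial : k) ≠ 0 := by exact_mod_cast (m + 1).factorial_ne_zero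
  have h2 : P (vdm k t) = (((m + 1).factorial : k)⁻¹ * c) • vdm k t := by
    rw [mul_smul, ← hc, h1, smul_smul, inv_mul_cancel₀ hf, one_smul]
  by_cases hc0 : c = 0
  · left
    rw [hc0, mul_zero, zero_smul] at h2
    have h3 : vdmSpan k n (m + 1) ≤ LinearMap.ker P := by
      unfold vdmSpan
      rw [Submodule.span_le]
      rintro _ ⟨s, rfl⟩
      obtain ⟨σ, hσ⟩ := exists_perm_emb t s
      have : P (vdm k s) = 0 := by
        rw [← hσ, ← rename_vdm, hcomm, h2, map_zero]
      exact this
    rw [Submodule.eq_bot_iff]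
    intro w hw
    have h4 : P w = 0 := h3 (hK hw)
    rw [hPid w hw] at h4
    have hn : (n.factorial : k) ≠ 0 := by exact_mod_cast n.factorial_ne_zero
    exact (smul_eq_zero.mp h4).resolve_left hn
  · right
    have ht : vdm k t ∈ K := by
      have h5 := hPK (vdm k t)
      rw [h2] at h5
      exact (K.smul_mem_iff (mul_ne_zero (inv_ne_zero hf) hc0)).mp h5
    unfold vdmSpan
    rw [Submodule.span_le]
    rintro _ ⟨s, rfl⟩
    obtain ⟨σ, hσ⟩ := exists_perm_emb t s
    have := hinv σ _ ht
    rw [rename_vdm, hσ] at this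
    exact this

theorem le_choose_aux (b c : ℕ) : b + c + 2 ≤ (b + c + 2).choose (b + 1) := by
  induction c with
  | zero =>
    have : (b + 0 + 2).choose (b + 1) = b + 2 := by
      have := Nat.choose_succ_self_right (b + 1)
      simpa using this
    omega
  | succ c ih =>
    have h1 : (b + (c + 1) + 2).choose (b + 1) =
        (b + c + 2).choose b + (b + c + 2).choose (b + 1) := by
      rw [show b + (c + 1) + 2 = (b + c + 2) + 1 by ring]
      exact Nat.choose_succ_succ _ _
    have h2 : 0 < (b + c + 2).choose b := Nat.choose_pos (by omega)
    omega

theorem choose_le_finrank_vdmSpan {k : Type*} [Field k] [CharZero k] (n b : ℕ) :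
    n.choose b ≤ Module.finrank k (vdmSpan k (n + 1) (b + 1)) := by
  classical
  let ι := {B : Finset (Fin n) // B ∈ Finset.powersetCard b (Finset.univ : Finset (Fin n))}
  have hcard : ∀ B : ι, B.1.card = b := fun B => (Finset.mem_powersetCard.mp B.2).2
  let t : ι → Fin (b + 1) → Fin (n + 1) := fun B =>
    Fin.cons 0 (fun i => ((B.1.orderEmbOfFin (hcard B)) i).succ)
  have htinj : ∀ B, Function.Injective (t B) := by
    intro B
    rw [Fin.cons_injective_iff]
    refine ⟨?_, ?_⟩
    · rintro ⟨i, hi⟩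
      exact Fin.succ_ne_zero _ hi
    · intro i j hij
      exact (B.1.orderEmbOfFin (hcard B)).injective (Fin.succ_injective _ hij)
  let p : ι → Fin (n + 1) → k := fun B =>
    Fin.cons 0 (fun i => if i ∈ B.1 then ((i : ℕ) + 1 : k) else 0)
  have heval : ∀ B B' : ι, eval (p B') (vdm k (t B)) =
      (Matrix.vandermonde (fun i => -(p B' (t B i)))).det := by
    intro B B'
    unfold vdm
    rw [RingHom.map_det]
    congr 1
    ext i j
    simp [Matrix.vandermonde_apply]
  have hdiag : ∀ B : ι, eval (p B) (vdm k (t B)) ≠ 0 := by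
    intro B
    rw [heval, Matrix.det_vandermonde_ne_zero_iff]
    have : (fun i => -(p B (t B i))) = (fun x => -x) ∘ (Fin.cons 0
        (fun i => (((B.1.orderEmbOfFin (hcard B)) i : ℕ) + 1 : k)) : Fin (b + 1) → k) := by
      ext i
      refine Fin.cases ?_ (fun i => ?_) i
      · simp [p, t]
      · simp [p, t]
    rw [this]
    apply neg_injective.comp
    rw [Fin.cons_injective_iff]
    refine ⟨?_, ?_⟩
    · rintro ⟨i, hi⟩
      exact Nat.cast_add_one_ne_zero _ hi
    · intro i j hij
      have h1 : ((B.1.orderEmbOfFin (hcard B)) i : ℕ) = ((B.1.orderEmbOfFin (hcard B)) j : ℕ) := by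
        have := add_right_cancel hij
        exact_mod_cast this
      exact (B.1.orderEmbOfFin (hcard B)).injective (Fin.ext h1)
  have hoff : ∀ B B' : ι, B ≠ B' → eval (p B') (vdm k (t B)) = 0 := by
    intro B B' hne
    rw [heval]
    by_contra h0
    rw [← ne_eq, Matrix.det_vandermonde_ne_zero_iff] at h0
    have hns : ¬ B.1 ⊆ B'.1 := by
      intro hsub
      exact hne (Subtype.ext (Finset.eq_of_subset_of_card_le hsub (by rw [hcard, hcard])))
    obtain ⟨y, hy, hy'⟩ := Finset.not_subset.mp hns
    have : y ∈ Set.range (B.1.orderEmbOfFin (hcard B)) := by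
      rw [Finset.range_orderEmbOfFin]
      exact hy
    obtain ⟨i, hi⟩ := this
    have h1 : (i.succ : Fin (b + 1)) = 0 := by
      apply h0
      simp [p, t, hi, hy']
    exact Fin.succ_ne_zero _ h1
  have hli : LinearIndependent k (fun B : ι => (⟨vdm k (t B),
      Submodule.subset_span ⟨⟨t B, htinj B⟩, rfl⟩⟩ : vdmSpan k (n + 1) (b + 1))) := by
    apply LinearIndependent.of_comp (vdmSpan k (n + 1) (b + 1)).subtype
    rw [Fintype.linearIndependent_iff]
    intro g hg B
    have h1 := congrArg (eval (p B)) hg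
    rw [map_sum, map_zero, Finset.sum_eq_single B] at h1
    · simp only [Function.comp_apply, Submodule.subtype_apply, smul_eval] at h1
      exact (mul_eq_zero.mp h1).resolve_right (hdiag B)
    · intro B' _ hne
      simp only [Function.comp_apply, Submodule.subtype_apply, smul_eval]
      rw [hoff B' B hne, mul_zero]
    · simp
  have hfin : Module.Finite k (vdmSpan k (n + 1) (b + 1)) := by
    unfold vdmSpan
    exact Module.Finite.span_of_finite k (Set.finite_range _)
  have := hli.fintype_card_le_finrank
  simpa [ι] using this


theorem vdm_eq_prod {k : Type*} [Field k] {n m : ℕ} (t : Fin m → Fin n) :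
    vdm k t = ∏ p ∈ Finset.univ.filter (fun p : Fin m × Fin m => p.1 < p.2),
      (X (t p.1) - X (t p.2)) := by
  unfold vdm
  rw [Matrix.det_vandermonde, Finset.prod_filter, ← Finset.univ_product_univ,
    Finset.prod_product]
  refine Finset.prod_congr rfl fun i _ => ?_
  rw [← Finset.prod_filter]
  refine Finset.prod_congr ?_ fun j _ => by ring
  ext j
  simp

theorem specht_column (l : List ℕ) (a b : ℕ) (hl : l = a :: List.replicate b 1) (ha : 2 ≤ a) :
    ∃ c : Fin (b + 1) ↪ (Σ i : Fin l.length, Fin (l.get i)),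
      ∀ (k : Type*) [Field k] (n : ℕ) (T : (Σ i : Fin l.length, Fin (l.get i)) ≃ Fin n),
        spechtPoly k l T = vdm k (T ∘ c) := by
  have hlen : b + 1 = l.length := by simp [hl]
  have hget : ∀ i : Fin l.length, 0 < (i : ℕ) → l.get i = 1 := by
    subst hl
    intro i hi
    obtain ⟨i, hi'⟩ := i
    cases i with
    | zero => simp at hi
    | succ i => simp
  have hpos : ∀ i : Fin l.length, 0 < l.get i := by
    intro i
    by_cases hi : 0 < (i : ℕ)
    · rw [hget i hi]
      exact one_pos
    · subst hl
      obtain ⟨i, hi'⟩ := i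
      have : i = 0 := by simpa using hi
      subst this
      simp
      omega
  let c : Fin (b + 1) ↪ (Σ i : Fin l.length, Fin (l.get i)) :=
    ⟨fun i => ⟨Fin.cast hlen i, ⟨0, hpos _⟩⟩, by
      intro i j hij
      have := congrArg Sigma.fst hij
      simpa using this⟩
  refine ⟨c, ?_⟩
  intro k _ n T
  rw [vdm_eq_prod]
  unfold spechtPoly
  symm
  refine Finset.prod_bij (fun p _ => (c p.1, c p.2)) ?_ ?_ ?_ ?_
  · intro p hp
    have hp' : p.1 < p.2 := by simpa using hp
    rw [Finset.mem_filter]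
    exact ⟨Finset.mem_univ _, rfl, hp'⟩
  · intro p _ q _ h
    simp only [Prod.mk.injEq] at h
    exact Prod.ext (c.injective h.1) (c.injective h.2)
  · rintro ⟨⟨i, u⟩, ⟨j, v⟩⟩ hp
    simp only [Finset.mem_filter, Finset.mem_univ, true_and] at hp
    obtain ⟨huv, hij⟩ := hp
    have hv : (v : ℕ) = 0 := by
      have h1 := v.2
      have h2 := hget j (by have : (i : ℕ) < j := hij; omega)
      omega
    refine ⟨(Fin.cast hlen.symm i, Fin.cast hlen.symm j), ?_, ?_⟩
    · simpa using hij
    · have e1 : u = ⟨0, hpos i⟩ := Fin.ext (by simp only; omega)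
      have e2 : v = ⟨0, hpos j⟩ := Fin.ext (by simp only; omega)
      subst e1 e2
      rfl
  · intro p _
    rfl

theorem spechtModule_eq (k : Type*) [Field k] (n : ℕ) (l : List ℕ) (a b : ℕ)
    (hl : l = a :: List.replicate b 1) (ha : 2 ≤ a) (hsum : l.sum = n) :
    SpechtModule k n l = vdmSpan k n (b + 1) := by
  classical
  obtain ⟨c, hc⟩ := specht_column l a b hl ha
  unfold SpechtModule vdmSpan
  apply le_antisymm
  · rw [Submodule.span_le]
    rintro _ ⟨T, rfl⟩
    apply Submodule.subset_span
    exact ⟨c.trans T.toEmbedding, (hc k n T).symm⟩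
  · rw [Submodule.span_le]
    rintro _ ⟨t, rfl⟩
    apply Submodule.subset_span
    have hcard : Fintype.card (Σ i : Fin l.length, Fin (l.get i)) = Fintype.card (Fin n) := by
      rw [Fintype.card_sigma]
      simp only [Fintype.card_fin]
      rw [← hsum, ← Fin.sum_univ_getElem l]
      rfl
    let T0 := Fintype.equivOfCardEq hcard
    obtain ⟨σ, hσ⟩ := exists_perm_emb (c.trans T0.toEmbedding) t
    refine ⟨T0.trans σ, ?_⟩
    rw [hc k n]
    show vdm k _ = vdm k _
    congr 1

theorem phi_vdm_mem_ker {k : Type*} [Field k] [CharZero k] {n m : ℕ} (S : Finset (Fin n))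
    (x : Fin n) (hx : x ∉ S) (hcard : n + 1 ≤ S.card + m)
    (t : Fin m ↪ Fin n) (f : MvPolynomial (Fin n) k)
    (hf : ∀ i j, i ≠ j → rename (Equiv.swap (t i) (t j)) f = -f) :
    rename (mergeMap S x) f = 0 := by
  classical
  have h1 : ∃ i j, i ≠ j ∧ t i ∈ insert x S ∧ t j ∈ insert x S := by
    have hU := Finset.card_union_add_card_inter (insert x S) (Finset.univ.map t)
    have hle : (insert x S ∪ Finset.univ.map t).card ≤ n := by
      simpa using Finset.card_le_univ (insert x S ∪ Finset.univ.map t)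
    rw [Finset.card_insert_of_notMem hx, Finset.card_map, Finset.card_univ, Fintype.card_fin] at hU
    have h2 : 1 < (insert x S ∩ Finset.univ.map t).card := by omega
    obtain ⟨p, hp, q, hq, hpq⟩ := Finset.one_lt_card.mp h2
    rw [Finset.mem_inter] at hp hq
    obtain ⟨i, _, rfl⟩ := Finset.mem_map.mp hp.2
    obtain ⟨j, _, rfl⟩ := Finset.mem_map.mp hq.2
    exact ⟨i, j, fun h => hpq (by rw [h]), hp.1, hq.1⟩
  obtain ⟨i, j, hij, hi, hj⟩ := h1
  have hmi : ∀ y ∈ insert x S, mergeMap S x y = x := by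
    intro y hy
    unfold mergeMap
    rcases Finset.mem_insert.mp hy with rfl | h
    · simp
    · simp [h]
  have h2 := congrArg (rename (mergeMap S x)) (hf i j hij)
  rw [rename_rename, map_neg] at h2
  have h3 : mergeMap S x ∘ (Equiv.swap (t i) (t j)) = mergeMap S x := by
    ext y
    simp only [Function.comp_apply]
    by_cases h4 : y = t i
    · subst h4
      rw [Equiv.swap_apply_left, hmi _ hi, hmi _ hj]
    · by_cases h5 : y = t j
      · subst h5
        rw [Equiv.swap_apply_right, hmi _ hi, hmi _ hj]
      · rw [Equiv.swap_apply_of_ne_of_ne h4 h5]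
  rw [h3] at h2
  exact self_eq_neg.mp h2

theorem vdm_swap {k : Type*} [Field k] {n m : ℕ} (t : Fin m ↪ Fin n) (i j : Fin m) (hij : i ≠ j) :
    rename (Equiv.swap (t i) (t j)) (vdm k t) = -vdm k t := by
  rw [rename_vdm]
  have : (Equiv.swap (t i) (t j) : Fin n → Fin n) ∘ t = t ∘ Equiv.swap i j := by
    ext l
    simp only [Function.comp_apply]
    rw [← Function.Injective.map_swap t.injective]
  rw [this, vdm_comp_perm, Equiv.Perm.sign_swap hij]
  simp

theorem zero_on_span {k M N ι : Type*} [Field k] [AddCommGroup M] [Module k M] [AddCommGroup N]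
    [Module k N] (f : ι → M) (ψ : Submodule.span k (Set.range f) →ₗ[k] N)
    (h : ∀ t, ψ ⟨f t, Submodule.subset_span ⟨t, rfl⟩⟩ = 0) (v) : ψ v = 0 := by
  obtain ⟨v, hv⟩ := v
  induction hv using Submodule.span_induction with
  | mem x hx =>
    obtain ⟨t, rfl⟩ := hx
    exact h t
  | zero => exact map_zero ψ
  | add x y hx hy ihx ihy =>
    have : ψ ⟨x + y, Submodule.add_mem _ hx hy⟩ = ψ ⟨x, hx⟩ + ψ ⟨y, hy⟩ := map_add ψ ⟨x, hx⟩ ⟨y, hy⟩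
    rw [this, ihx, ihy, add_zero]
  | smul c x hx ihx =>
    have : ψ ⟨c • x, Submodule.smul_mem _ c hx⟩ = c • ψ ⟨x, hx⟩ := map_smul ψ c ⟨x, hx⟩
    rw [this, ihx, smul_zero]

theorem phi_mem_ker {k : Type*} [Field k] [CharZero k] {n m : ℕ} (S : Finset (Fin n))
    (x : Fin n) (hx : x ∉ S) (hcard : n + 1 ≤ S.card + m)
    (φ : ↥(vdmSpan k n m) →ₗ[k] MvPolynomial (Fin n) k)
    (hφeq : ∀ (σ : Equiv.Perm (Fin n)) (v w : vdmSpan k n m),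
      (w : MvPolynomial (Fin n) k) = rename (⇑σ) (v : MvPolynomial (Fin n) k) →
      φ w = rename (⇑σ) (φ v)) (v : vdmSpan k n m) :
    rename (mergeMap S x) (φ v) = 0 := by
  refine zero_on_span (fun t : Fin m ↪ Fin n => vdm k t)
    ((rename (R := k) (mergeMap S x)).toLinearMap ∘ₗ φ) (fun t => ?_) v
  have hmem : vdm k t ∈ vdmSpan k n m := Submodule.subset_span ⟨t, rfl⟩
  refine phi_vdm_mem_ker S x hx hcard t (φ ⟨vdm k t, hmem⟩) ?_
  intro i j hij
  have h1 := hφeq (Equiv.swap (t i) (t j)) ⟨vdm k t, hmem⟩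
    (-⟨vdm k t, hmem⟩) (vdm_swap t i j hij).symm
  rw [← h1, map_neg]

theorem main_aux {k : Type*} [Field k] [CharZero k] {n : ℕ}
    (l : List ℕ) (hsum : l.sum = n)
    (a b : ℕ) (hl : l = a :: List.replicate b 1) (ha : 2 ≤ a) (hb : 2 ≤ b)
    (d : ℕ)
    (φ : ↥(SpechtModule k n l) →ₗ[k] MvPolynomial (Fin n) k)
    (hφd : ∀ v, φ v ∈ homogeneousSubmodule (Fin n) k d)
    (hφeq : ∀ (σ : Equiv.Perm (Fin n)) (v w : SpechtModule k n l),
      (w : MvPolynomial (Fin n) k) = rename (⇑σ) (v : MvPolynomial (Fin n) k) →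
      φ w = rename (⇑σ) (φ v))
    (hφ : φ ≠ 0) :
    ¬ IsCompleteIntersection (Ideal.span (Set.range φ)) := by
  classical
  have hS := spechtModule_eq k n l a b hl ha hsum
  have hn : n = a + b := by rw [← hsum, hl]; simp
  clear hsum hl
  revert φ
  rw [hS]
  intro φ hφd hφeq hφ
  have hstab : ∀ (σ : Equiv.Perm (Fin n)), ∀ w ∈ vdmSpan k n (b + 1),
      rename σ w ∈ vdmSpan k n (b + 1) := by
    intro σ
    have : vdmSpan k n (b + 1) ≤ (vdmSpan k n (b + 1)).comap (rename (R := k) σ).toLinearMap := by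
      conv_lhs => unfold vdmSpan
      rw [Submodule.span_le]
      rintro _ ⟨t, rfl⟩
      apply Submodule.subset_span
      exact ⟨t.trans σ.toEmbedding, (rename_vdm σ t).symm⟩
    exact this
  -- injectivity
  have hker : LinearMap.ker φ = ⊥ := by
    have h1 := vdmSpan_irred (m := b) ((LinearMap.ker φ).map (vdmSpan k n (b + 1)).subtype)
      (Submodule.map_subtype_le _ _) (by
        rintro σ _ ⟨v, hv, rfl⟩
        refine ⟨⟨rename σ (v : MvPolynomial (Fin n) k), hstab σ _ v.2⟩, ?_, rfl⟩
        have h2 := hφeq σ v ⟨rename σ (v : MvPolynomial (Fin n) k), hstab σ _ v.2⟩ rfl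
        have h3 : φ v = 0 := hv
        rw [h3, map_zero] at h2
        exact h2)
    rcases h1 with h1 | h1
    · rw [Submodule.eq_bot_iff]
      intro v hv
      have h2 : (v : MvPolynomial (Fin n) k) ∈
          (LinearMap.ker φ).map (vdmSpan k n (b + 1)).subtype := ⟨v, hv, rfl⟩
      rw [h1] at h2
      exact Subtype.ext h2
    · exfalso
      apply hφ
      ext1 v
      obtain ⟨w, hw, hwv⟩ := h1 v.2
      have : w = v := Subtype.ext hwv
      rw [← this]
      exact hw
  rintro ⟨rs, hreg, hspan⟩
  -- number of generators
  have hrange : (Set.range φ) = ((LinearMap.range φ : Submodule k _) : Set _) := rfl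
  have h1 : Module.finrank k (LinearMap.range φ) ≤ rs.length := by
    apply finrank_le_of_span_eq d
    · rintro _ ⟨v, rfl⟩
      exact hφd v
    · rw [hspan, hrange]
  rw [LinearMap.finrank_range_of_inj (LinearMap.ker_eq_bot.mp hker)] at h1
  obtain ⟨a', rfl⟩ : ∃ a', a = a' + 2 := ⟨a - 2, by omega⟩
  obtain ⟨b', rfl⟩ : ∃ b', b = b' + 2 := ⟨b - 2, by omega⟩
  obtain rfl : n = (a' + b' + 3) + 1 := by omega
  have h2 := choose_le_finrank_vdmSpan (k := k) (a' + b' + 3) (b' + 2)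
  have h3 := le_choose_aux (b' + 1) a'
  rw [show b' + 1 + a' + 2 = a' + b' + 3 by ring, show b' + 1 + 1 = b' + 2 by ring] at h3
  -- height
  obtain ⟨S, hSs, hSc⟩ := Finset.exists_subset_card_eq (n := a' + 2)
    (s := (Finset.univ.erase 0 : Finset (Fin (a' + b' + 3 + 1)))) (by simp; omega)
  have h0 : (0 : Fin (a' + b' + 3 + 1)) ∉ S := fun h => by simpa using hSs h
  have hcS : a' + b' + 3 + 1 + 1 ≤ S.card + (b' + 2 + 1) := by rw [hSc]; omega
  have hp : (RingHom.ker (rename (R := k) (mergeMap S 0))).IsPrime := RingHom.ker_isPrime _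
  have hle : Ideal.span (Set.range φ) ≤ RingHom.ker (rename (R := k) (mergeMap S 0)) := by
    rw [Ideal.span_le]
    rintro _ ⟨v, rfl⟩
    exact phi_mem_ker S 0 h0 hcS φ hφeq v
  have h4 := regular_length_le_height _ rs hreg (fun r hr => hle (by
    rw [← hspan]
    exact Ideal.subset_span hr))
  have h5 := h4.trans (height_ker_merge_le (k := k) S 0 h0)
  have h6 : rs.length ≤ S.card := by exact_mod_cast h5
  omega

/-- Let `λ = (a,1^b)` be a hook partition of `n` containing
`(2,1,1)` (i.e. `a ≥ 2` and `b ≥ 2`).  If `φ : S^λ → R_d` is a nonzero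
`S_n`-equivariant map and `I` is the ideal generated by the image of `φ`, then
`I` is not a complete intersection. -/
theorem stmt3 {k : Type*} [Field k] [CharZero k] {n : ℕ}
    (l : List ℕ) (hsum : l.sum = n)
    -- `λ = (a, 1^b)` is a hook containing `(2,1,1)`, i.e. `a ≥ 2`, `b ≥ 2`:
    (hhook : ∃ a b : ℕ, l = a :: List.replicate b 1 ∧ 2 ≤ a ∧ 2 ≤ b)
    (d : ℕ)
    (φ : ↥(SpechtModule k n l) →ₗ[k] MvPolynomial (Fin n) k)
    (hφd : ∀ v, φ v ∈ homogeneousSubmodule (Fin n) k d)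
    -- `φ` is `S_n`-equivariant:
    (hφeq : ∀ (σ : Equiv.Perm (Fin n)) (v w : SpechtModule k n l),
      (w : MvPolynomial (Fin n) k) = rename (⇑σ) (v : MvPolynomial (Fin n) k) →
      φ w = rename (⇑σ) (φ v))
    (hφ : φ ≠ 0) :
    ¬ IsCompleteIntersection (Ideal.span (Set.range φ)) := by
  obtain ⟨a, b, hl, ha, hb⟩ := hhook
  exact main_aux l hsum a b hl ha hb d φ hφd hφeq hφ

end
end

section
/- If I ⊆ R = k[x_1,...,x_n] is an S_n-stable complete intersection ideal, then I/mI is isomorphic as an S_n-representation to one of: (I) a direct sum of m trivial representations S^{(n)} with 1 ≤ m ≤ n; (II) one alternating representation S^{(1^n)} plus at most n-1 trivials; (III) one standard representation S^{(n-1,1)} plus at most one trivial; or (IV) for n = 4 only, one copy of S^{(2,2)} plus at most two trivials. -/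
open MvPolynomial

noncomputable section

/-- A subspace of `k[x_1,…,x_n]` is `S_n`-stable if it is closed under
permutations of the variables. -/
def Stable {k : Type*} [Field k] {n : ℕ}
    (W : Submodule k (MvPolynomial (Fin n) k)) : Prop :=
  ∀ σ : Equiv.Perm (Fin n), ∀ p ∈ W, rename (⇑σ) p ∈ W

/-- Two subspaces of `k[x_1,…,x_n]` are equivariantly isomorphic if there is a
`k`-linear isomorphism between them commuting with the `S_n`-action. -/
def EqIso {k : Type*} [Field k] {n : ℕ}
    (W U : Submodule k (MvPolynomial (Fin n) k)) : Prop :=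
  ∃ e : W ≃ₗ[k] U, ∀ (σ : Equiv.Perm (Fin n)) (v w : W),
    (w : MvPolynomial (Fin n) k) = rename (⇑σ) (v : MvPolynomial (Fin n) k) →
    ((e w : MvPolynomial (Fin n) k) = rename (⇑σ) (e v : MvPolynomial (Fin n) k))

/-- The Specht module of the hook partition `(n-u, 1^u)`, realized inside
`k[x_1,…,x_n]` as the span of the Specht polynomials (Vandermonde
determinants on `u+1` of the variables).  For `u = 1` this is the standard
representation `S^{(n-1,1)}`. -/
def HookModule (k : Type*) [Field k] (n u : ℕ) : Submodule k (MvPolynomial (Fin n) k) :=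
  Submodule.span k
    (Set.range fun a : Fin (u + 1) ↪ Fin n =>
      ∏ p ∈ Finset.univ.filter (fun p : Fin (u + 1) × Fin (u + 1) => p.1 < p.2),
        (X (a p.1) - X (a p.2)))

set_option linter.unusedSectionVars false

theorem aux_length_le_height {A : Type*} [CommRing A] (rs : List A)
    (h : RingTheory.Sequence.IsWeaklyRegular A rs) :
    (rs.length : ℕ∞) ≤ (Ideal.span {r | r ∈ rs}).height := by
  induction rs using List.reverseRecOn with
  | nil => simp
  | append_singleton rs r ih =>
    rw [RingTheory.Sequence.isWeaklyRegular_append_iff,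
      RingTheory.Sequence.isWeaklyRegular_singleton_iff] at h
    obtain ⟨h1, h2⟩ := h
    have ih := ih h1
    rw [Ideal.height_eq_inf_minimalPrimes]
    refine le_iInf₂ fun P hP => ?_
    have hPp := hP.isPrime
    have hle : Ideal.ofList rs ≤ P :=
      le_trans (Ideal.span_mono (by intro x hx; simp at hx ⊢; exact Or.inl hx)) hP.le
    have hrP : r ∈ P := hP.le (Ideal.subset_span (by simp))
    obtain ⟨Q, hQ, hQP⟩ := Ideal.exists_minimalPrimes_le hle
    have hQp := hQ.isPrime
    have hann : Module.annihilator A (A ⧸ (Ideal.ofList rs • ⊤ : Submodule A A)) =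
        Ideal.ofList rs := by
      have : (Ideal.ofList rs • ⊤ : Submodule A A) = Ideal.ofList rs := by simp
      rw [this]
      exact Ideal.annihilator_quotient
    have hrQ : r ∉ Q := h2.notMem_of_mem_minimalPrimes (by rw [hann]; exact hQ)
    have hlt : Q < P := lt_of_le_of_ne hQP (by rintro rfl; exact hrQ hrP)
    have := Ideal.height_add_one_le_of_lt_of_isPrime hlt
    calc ((rs ++ [r]).length : ℕ∞) = rs.length + 1 := by simp
      _ ≤ Q.height + 1 := by gcongr; exact ih.trans (Ideal.height_mono hQ.le)
      _ ≤ _ := this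

theorem aux_comp_X_mul {k : Type*} [Field k] {n : ℕ} (d : ℕ) (i : Fin n)
    (q : MvPolynomial (Fin n) k) :
    homogeneousComponent d (X i * q) = 0 ∨ ∃ e < d,
      homogeneousComponent d (X i * q) = X i * homogeneousComponent e q := by
  rcases d with _ | d
  · left; simp [homogeneousComponent_zero, coeff_X_mul']
  · right
    refine ⟨d, Nat.lt_succ_self d, ?_⟩
    ext m
    rw [coeff_homogeneousComponent, coeff_X_mul', coeff_X_mul', coeff_homogeneousComponent]
    by_cases hi : i ∈ m.support
    · obtain ⟨m', rfl⟩ : ∃ m', m = m' + Finsupp.single i 1 := by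
        refine ⟨m - Finsupp.single i 1, ?_⟩
        ext j
        by_cases hj : j = i
        · subst hj; simp at hi ⊢; omega
        · simp [Ne.symm hj]
      simp
    · simp [hi]

theorem aux_span_eq {k : Type*} [Field k] {n : ℕ}
    (I : Ideal (MvPolynomial (Fin n) k))
    (V : Submodule k (MvPolynomial (Fin n) k))
    (hVI : V ≤ I.restrictScalars k)
    (hVgr : ∀ p ∈ V, ∀ d, homogeneousComponent d p ∈ V)
    (hsup : V ⊔ (Ideal.span (Set.range (X : Fin n → MvPolynomial (Fin n) k)) * I).restrictScalars k
      = I.restrictScalars k) :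
    Ideal.span (V : Set (MvPolynomial (Fin n) k)) = I := by
  set J := Ideal.span (V : Set (MvPolynomial (Fin n) k)) with hJ
  apply le_antisymm
  · exact Ideal.span_le.2 hVI
  have key : ∀ d, ∀ p ∈ I, homogeneousComponent d p ∈ J := by
    intro d
    induction d using Nat.strong_induction_on with
    | _ d ih =>
      have hmI : ∀ p ∈ Ideal.span (Set.range (X : Fin n → MvPolynomial (Fin n) k)) * I,
          homogeneousComponent d p ∈ J := by
        intro p hp
        refine Submodule.mul_induction_on hp ?_ ?_
        · intro a ha q hq
          induction ha using Submodule.span_induction generalizing q with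
          | mem x hx =>
            obtain ⟨i, rfl⟩ := hx
            rcases aux_comp_X_mul d i q with h | ⟨e, he, h⟩
            · rw [h]; exact zero_mem _
            · rw [h]; exact J.mul_mem_left _ (ih e he q hq)
          | zero => simp
          | add x y _ _ hx hy => rw [add_mul, map_add]; exact add_mem (hx q hq) (hy q hq)
          | smul b x _ hx =>
            rw [smul_eq_mul, mul_comm b x, mul_assoc]; exact hx _ (I.mul_mem_left _ hq)
        · intro x y hx hy; rw [map_add]; exact add_mem hx hy
      intro p hp
      have hp' : p ∈ I.restrictScalars k := hp
      rw [← hsup, Submodule.mem_sup] at hp'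
      obtain ⟨v, hv, w, hw, rfl⟩ := hp'
      rw [map_add]
      exact add_mem (Ideal.subset_span (hVgr v hv d)) (hmI w hw)
  intro p hp
  rw [← sum_homogeneousComponent p]
  exact sum_mem fun i _ => key i p hp

theorem aux_le_m {k : Type*} [Field k] {n : ℕ}
    (I : Ideal (MvPolynomial (Fin n) k)) (hI : I ≠ ⊤)
    (hIhom : ∀ p ∈ I, ∀ d, homogeneousComponent d p ∈ I) :
    ∀ p ∈ I, constantCoeff p = 0 := by
  intro p hp
  by_contra h
  apply hI
  have h0 := hIhom p hp 0
  rw [homogeneousComponent_zero] at h0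
  refine Ideal.eq_top_of_isUnit_mem _ h0 ?_
  exact (IsUnit.mk0 _ h).map C

theorem aux_mem_m {k : Type*} [Field k] {n : ℕ} (p : MvPolynomial (Fin n) k) :
    p - C (constantCoeff p) ∈ Ideal.span (Set.range (X : Fin n → MvPolynomial (Fin n) k)) := by
  induction p using MvPolynomial.induction_on with
  | C a => simp
  | add p q hp hq =>
    have : p + q - C (constantCoeff (p + q)) =
      (p - C (constantCoeff p)) + (q - C (constantCoeff q)) := by simp; ring
    rw [this]; exact add_mem hp hq
  | mul_X p i hp =>
    simp
    exact Ideal.mul_mem_left _ _ (Ideal.subset_span ⟨i, rfl⟩)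

theorem aux_finrank_le {k : Type*} [Field k] {n : ℕ}
    (rs : List (MvPolynomial (Fin n) k))
    (I : Ideal (MvPolynomial (Fin n) k)) (hI : Ideal.span {r | r ∈ rs} = I)
    (V : Submodule k (MvPolynomial (Fin n) k))
    (hVI : V ≤ I.restrictScalars k)
    (hdisj : Disjoint V
      ((Ideal.span (Set.range (X : Fin n → MvPolynomial (Fin n) k)) * I).restrictScalars k)) :
    FiniteDimensional k V ∧ Module.finrank k V ≤ rs.length := by
  classical
  set M := (Ideal.span (Set.range (X : Fin n → MvPolynomial (Fin n) k)) * I).restrictScalars k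
    with hM
  have hle : I.restrictScalars k ≤ Submodule.span k {r | r ∈ rs} ⊔ M := by
    intro p hp
    have hp : p ∈ Ideal.span {r | r ∈ rs} := by rw [hI]; exact hp
    induction hp using Submodule.span_induction with
    | mem x hx => exact Submodule.mem_sup_left (Submodule.subset_span hx)
    | zero => exact zero_mem _
    | add x y _ _ hx hy => exact add_mem (hx (by rw [← hI]; assumption)) (hy (by rw [← hI]; assumption))
    | smul a x hx hxx =>
      have hxI : x ∈ I := by rw [← hI]; exact hx
      have h1 := hxx hxI
      have : a • x = constantCoeff a • x + (a - C (constantCoeff a)) * x := by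
        rw [smul_eq_mul, smul_eq_C_mul]; ring
      rw [this]
      exact add_mem (Submodule.smul_mem _ _ h1)
        (Submodule.mem_sup_right (Ideal.mul_mem_mul (aux_mem_m a) hxI))
  let f : V →ₗ[k] (MvPolynomial (Fin n) k ⧸ M) := M.mkQ.domRestrict V
  have hf : Function.Injective f := by
    rw [← LinearMap.ker_eq_bot, LinearMap.ker_eq_bot']
    intro v hv
    have : (v : MvPolynomial (Fin n) k) ∈ M := by
      simpa [f] using hv
    have := Submodule.disjoint_def.1 hdisj v v.2 this
    exact Subtype.ext this
  set T := Submodule.span k (M.mkQ '' {r | r ∈ rs}) with hT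
  have hfin : (M.mkQ '' {r | r ∈ rs}).Finite := (List.finite_toSet rs).image _
  have hfT : ∀ v, f v ∈ T := by
    intro v
    have := hle (hVI v.2)
    have h2 := Submodule.mem_map_of_mem (f := M.mkQ) this
    rw [Submodule.map_sup, Submodule.map_span] at h2
    simpa [f, hT] using h2
  have : FiniteDimensional k T := FiniteDimensional.span_of_finite k hfin
  let g : V →ₗ[k] T := f.codRestrict T hfT
  have hg : Function.Injective g := by
    intro a b hab
    exact hf (congrArg Subtype.val hab)
  refine ⟨FiniteDimensional.of_injective g hg, (LinearMap.finrank_le_finrank_of_injective hg).trans ?_⟩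
  have : M.mkQ '' {r | r ∈ rs} = ((rs.map M.mkQ).toFinset : Set _) := by ext; simp
  rw [hT, this]
  refine (finrank_span_finset_le_card _).trans ((List.toFinset_card_le _).trans (by simp))

theorem aux_swap_sub {k : Type*} [Field k] {n : ℕ} (i j : Fin n) (p : MvPolynomial (Fin n) k) :
    X i - X j ∣ rename (Equiv.swap i j) p - p := by
  induction p using MvPolynomial.induction_on with
  | C a => simp
  | add p q hp hq =>
    rw [map_add, add_sub_add_comm]; exact dvd_add hp hq
  | mul_X p l hp =>
    have hl : X i - X j ∣ rename (Equiv.swap i j) (X l : MvPolynomial (Fin n) k) - X l := by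
      rw [rename_X]
      by_cases h1 : l = i
      · subst h1; rw [Equiv.swap_apply_left]; exact (dvd_sub_comm).1 dvd_rfl
      by_cases h2 : l = j
      · subst h2; rw [Equiv.swap_apply_right]
      rw [Equiv.swap_apply_of_ne_of_ne h1 h2]; simp
    have : rename (Equiv.swap i j) (p * X l) - p * X l =
      (rename (Equiv.swap i j) p - p) * rename (Equiv.swap i j) (X l) +
        p * (rename (Equiv.swap i j) (X l) - X l) := by rw [map_mul]; ring
    rw [this]
    exact dvd_add (hp.mul_right _) (hl.mul_left _)

/-- height of an ideal generated by a finite-dimensional space and one more element -/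
theorem aux_height_le {k : Type*} [Field k] {n : ℕ}
    (U : Submodule k (MvPolynomial (Fin n) k)) [FiniteDimensional k U]
    (l : MvPolynomial (Fin n) k)
    (h : Ideal.span ((U : Set (MvPolynomial (Fin n) k)) ∪ {l}) ≠ ⊤) :
    (Ideal.span ((U : Set (MvPolynomial (Fin n) k)) ∪ {l})).height ≤
      ((Module.finrank k U + 1 : ℕ) : ℕ∞) := by
  classical
  let b := Module.finBasis k U
  let s : Finset (MvPolynomial (Fin n) k) := insert l (Finset.univ.image fun i => (b i : MvPolynomial (Fin n) k))
  have hs : Ideal.span ((U : Set (MvPolynomial (Fin n) k)) ∪ {l}) = Ideal.span (s : Set _) := by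
    apply le_antisymm
    · rw [Ideal.span_le]
      rintro x (hx | hx)
      · have := b.sum_repr ⟨x, hx⟩
        have := congrArg Subtype.val this
        simp only [Submodule.coe_sum, Submodule.coe_smul] at this
        rw [← this]
        refine sum_mem fun i _ => ?_
        rw [smul_eq_C_mul]
        exact Ideal.mul_mem_left _ _ (Ideal.subset_span (by simp [s]))
      · rw [Set.mem_singleton_iff.1 hx]
        exact Ideal.subset_span (by simp [s])
    · apply Ideal.span_mono
      intro x hx
      simp only [s, Finset.coe_insert, Set.mem_insert_iff, Finset.coe_image, Set.mem_image] at hx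
      rcases hx with rfl | ⟨i, _, rfl⟩
      · right; rfl
      · left; exact (b i).2
  refine (Ideal.height_le_spanFinrank _ h).trans ?_
  rw [hs]
  refine (Submodule.spanFinrank_span_le_encard _).trans ?_
  rw [Set.encard_coe_eq_coe_finsetCard]
  norm_cast
  refine (Finset.card_insert_le _ _).trans ?_
  have := Finset.card_image_le (s := Finset.univ) (f := fun i => (b i : MvPolynomial (Fin n) k))
  simp at this
  omega

theorem aux_swap {k : Type*} [Field k] [CharZero k] {n : ℕ} (i j : Fin n)
    (I : Ideal (MvPolynomial (Fin n) k))
    (hc : ∀ p ∈ I, constantCoeff p = 0)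
    (V : Submodule k (MvPolynomial (Fin n) k)) [FiniteDimensional k V]
    (hVI : Ideal.span (V : Set (MvPolynomial (Fin n) k)) = I)
    (hVstab : ∀ p ∈ V, rename (Equiv.swap i j) p ∈ V)
    (hV : (Module.finrank k V : ℕ∞) ≤ I.height) :
    Module.finrank k (V.map ((rename (R := k) (Equiv.swap i j)).toLinearMap - LinearMap.id)) ≤ 1 := by
  set D : MvPolynomial (Fin n) k →ₗ[k] MvPolynomial (Fin n) k :=
    (rename (R := k) (Equiv.swap i j)).toLinearMap - LinearMap.id with hD
  have hDa : ∀ p, D p = rename (Equiv.swap i j) p - p := fun p => rfl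
  have hinv : ∀ p : MvPolynomial (Fin n) k,
      rename (Equiv.swap i j) (rename (Equiv.swap i j) p) = p := by
    intro p; rw [rename_rename]
    have : (Equiv.swap i j : Fin n → Fin n) ∘ (Equiv.swap i j) = id := by ext x; simp
    rw [this, rename_id_apply]
  set U := V ⊓ LinearMap.ker D with hU
  have hrn : Module.finrank k (V.map D) + Module.finrank k U = Module.finrank k V := by
    have h1 := LinearMap.finrank_range_add_finrank_ker (D.domRestrict V)
    rw [LinearMap.range_domRestrict] at h1
    rw [← h1]; congr 1
    have : U = (LinearMap.ker (D.domRestrict V)).map V.subtype := by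
      ext x
      simp [hU, Submodule.mem_map, and_comm]
    rw [this]
    exact Submodule.finrank_map_subtype_eq V _
  have hle : I ≤ Ideal.span ((U : Set (MvPolynomial (Fin n) k)) ∪ {X i - X j}) := by
    rw [← hVI, Ideal.span_le]
    intro v hv
    have : v = (2⁻¹ : k) • (v + rename (Equiv.swap i j) v) - (2⁻¹ : k) • D v := by
      rw [hDa, ← smul_sub]
      have : v + rename (Equiv.swap i j) v - (rename (Equiv.swap i j) v - v) = (2 : k) • v := by
        rw [two_smul]; ring
      rw [this, smul_smul]; simp
    rw [this]
    refine sub_mem (Ideal.subset_span (Or.inl ⟨V.smul_mem _ (add_mem hv (hVstab v hv)), ?_⟩)) ?_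
    · rw [SetLike.mem_coe, LinearMap.mem_ker, map_smul, hDa, map_add, hinv]
      simp; ring
    · rw [smul_eq_C_mul]
      refine Ideal.mul_mem_left _ _ ?_
      exact Ideal.mem_of_dvd _ (aux_swap_sub i j v) (Ideal.subset_span (by simp))
  have hne : Ideal.span ((U : Set (MvPolynomial (Fin n) k)) ∪ {X i - X j}) ≠ ⊤ := by
    have : Ideal.span ((U : Set (MvPolynomial (Fin n) k)) ∪ {X i - X j}) ≤
        RingHom.ker (constantCoeff : MvPolynomial (Fin n) k →+* k) := by
      rw [Ideal.span_le]
      rintro x (hx | hx)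
      · exact hc x (by rw [← hVI]; exact Ideal.subset_span hx.1)
      · rw [Set.mem_singleton_iff.1 hx]; simp [RingHom.mem_ker]
    intro h
    rw [h, top_le_iff] at this
    exact RingHom.ker_ne_top _ this
  have : FiniteDimensional k U := Submodule.finiteDimensional_of_le (inf_le_left : U ≤ V)
  have := hV.trans ((Ideal.height_mono hle).trans (aux_height_le U _ hne))
  norm_cast at this
  omega

theorem aux_finrank_le_n {k : Type*} [Field k] {n : ℕ}
    (I : Ideal (MvPolynomial (Fin n) k))
    (hc : ∀ p ∈ I, constantCoeff p = 0) : I.height ≤ n := by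
  classical
  have hle : I ≤ Ideal.span (Set.range (X : Fin n → MvPolynomial (Fin n) k)) := by
    intro p hp
    have := aux_mem_m p
    simpa [hc p hp] using this
  refine (Ideal.height_mono hle).trans ?_
  have hne : Ideal.span (Set.range (X : Fin n → MvPolynomial (Fin n) k)) ≠ ⊤ := by
    have : Ideal.span (Set.range (X : Fin n → MvPolynomial (Fin n) k)) ≤
        RingHom.ker (constantCoeff : MvPolynomial (Fin n) k →+* k) := by
      rw [Ideal.span_le]
      rintro x ⟨i, rfl⟩
      simp [RingHom.mem_ker]
    intro h
    rw [h, top_le_iff] at this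
    exact RingHom.ker_ne_top _ this
  refine (Ideal.height_le_spanFinrank _ hne).trans ?_
  refine (Submodule.spanFinrank_span_le_encard _).trans ?_
  rw [← Set.image_univ]
  refine (Set.encard_image_le _ _).trans ?_
  simp

section Rep

variable {k : Type*} [Field k] [CharZero k] {M : Type*} [AddCommGroup M] [Module k M] {n : ℕ}

/-- image of `τ - 1` on `V`, `τ` the transposition `(i j)` -/
def auxL (ρ : Equiv.Perm (Fin n) →* Module.End k M) (V : Submodule k M) (i j : Fin n) :
    Submodule k M := V.map (ρ (Equiv.swap i j) - LinearMap.id)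

/-- the sum of all the lines `auxL` -/
def auxW (ρ : Equiv.Perm (Fin n) →* Module.End k M) (V : Submodule k M) : Submodule k M :=
  Submodule.span k {x | ∃ i j, i ≠ j ∧ x ∈ auxL ρ V i j}

/-- invariants of `V` -/
def auxInv (ρ : Equiv.Perm (Fin n) →* Module.End k M) (V : Submodule k M) : Submodule k M where
  carrier := {v | v ∈ V ∧ ∀ σ, ρ σ v = v}
  add_mem' := fun ⟨h1, h2⟩ ⟨h3, h4⟩ => ⟨add_mem h1 h3, fun σ => by rw [map_add, h2, h4]⟩
  zero_mem' := ⟨zero_mem _, fun σ => map_zero _⟩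
  smul_mem' := fun c _ ⟨h1, h2⟩ => ⟨V.smul_mem c h1, fun σ => by rw [map_smul, h2]⟩

variable (ρ : Equiv.Perm (Fin n) →* Module.End k M) (V : Submodule k M)

theorem aux_mul (σ τ : Equiv.Perm (Fin n)) (x : M) : ρ (σ * τ) x = ρ σ (ρ τ x) := by
  rw [map_mul]; rfl

theorem aux_one (x : M) : ρ 1 x = x := by
  rw [map_one]; rfl

theorem aux_inj (σ : Equiv.Perm (Fin n)) {x y : M} (h : ρ σ x = ρ σ y) : x = y := by
  have := congrArg (ρ σ⁻¹) h
  rwa [← aux_mul, ← aux_mul, inv_mul_cancel, aux_one, aux_one] at this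

theorem aux_ne (σ : Equiv.Perm (Fin n)) {x : M} (h : x ≠ 0) : ρ σ x ≠ 0 := by
  intro h0
  exact h (aux_inj ρ σ (by rw [h0, map_zero]))

theorem aux_ss (i j : Fin n) (x : M) : ρ (Equiv.swap i j) (ρ (Equiv.swap i j) x) = x := by
  rw [← aux_mul, Equiv.swap_mul_self, aux_one]

theorem aux_memL {i j : Fin n} {x : M} :
    x ∈ auxL ρ V i j ↔ ∃ v ∈ V, ρ (Equiv.swap i j) v - v = x := Iff.rfl

theorem aux_L_symm (i j : Fin n) : auxL ρ V i j = auxL ρ V j i := by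
  unfold auxL; rw [Equiv.swap_comm]

variable {V}

theorem aux_L_neg {i j : Fin n} {x : M} (h : x ∈ auxL ρ V i j) : ρ (Equiv.swap i j) x = -x := by
  obtain ⟨v, hv, rfl⟩ := (aux_memL ρ V).1 h
  rw [map_sub, aux_ss]; abel

theorem aux_L_of_neg {i j : Fin n} {x : M} (hx : x ∈ V) (h : ρ (Equiv.swap i j) x = -x) :
    x ∈ auxL ρ V i j := by
  refine (aux_memL ρ V).2 ⟨(-2⁻¹ : k) • x, V.smul_mem _ hx, ?_⟩
  rw [map_smul, h, ← smul_sub]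
  have : -x - x = (-2 : k) • x := by rw [neg_smul, two_smul]; abel
  rw [this, smul_smul]
  norm_num


theorem aux_L_le (hV : ∀ σ, ∀ v ∈ V, ρ σ v ∈ V) (i j : Fin n) : auxL ρ V i j ≤ V := by
  intro x h
  obtain ⟨v, hv, rfl⟩ := (aux_memL ρ V).1 h
  exact sub_mem (hV _ _ hv) hv

theorem aux_L_conj (hV : ∀ σ, ∀ v ∈ V, ρ σ v ∈ V) (σ : Equiv.Perm (Fin n)) {i j : Fin n} {x : M} (h : x ∈ auxL ρ V i j) :
    ρ σ x ∈ auxL ρ V (σ i) (σ j) := by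
  apply aux_L_of_neg ρ (hV _ _ (aux_L_le ρ hV i j h))
  have h1 := aux_L_neg ρ h
  have : Equiv.swap (σ i) (σ j) * σ = σ * Equiv.swap i j := by
    rw [Equiv.mul_swap_eq_swap_mul]
  rw [← aux_mul, this, aux_mul, h1, map_neg]

theorem aux_W_le (hV : ∀ σ, ∀ v ∈ V, ρ σ v ∈ V) : auxW ρ V ≤ V := by
  refine Submodule.span_le.2 ?_
  rintro x ⟨i, j, _, h⟩
  exact aux_L_le ρ hV i j h

theorem aux_W_stable (hV : ∀ σ, ∀ v ∈ V, ρ σ v ∈ V) (σ : Equiv.Perm (Fin n)) {x : M} (hx : x ∈ auxW ρ V) : ρ σ x ∈ auxW ρ V := by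
  induction hx using Submodule.span_induction with
  | mem x hx =>
    obtain ⟨i, j, hij, h⟩ := hx
    exact Submodule.subset_span ⟨σ i, σ j, fun h => hij (σ.injective h), aux_L_conj ρ hV σ h⟩
  | zero => rw [map_zero]; exact zero_mem _
  | add x y _ _ hx hy => rw [map_add]; exact add_mem hx hy
  | smul c x _ hx => rw [map_smul]; exact Submodule.smul_mem _ _ hx

theorem aux_sub_mem_W (hV : ∀ σ, ∀ v ∈ V, ρ σ v ∈ V) (σ : Equiv.Perm (Fin n)) {v : M} (hv : v ∈ V) : ρ σ v - v ∈ auxW ρ V := by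
  induction σ using Equiv.Perm.swap_induction_on with
  | one => rw [aux_one, sub_self]; exact zero_mem _
  | swap_mul f x y hxy ih =>
    have : ρ (Equiv.swap x y * f) v - v =
      (ρ (Equiv.swap x y) (ρ f v) - ρ f v) + (ρ f v - v) := by rw [aux_mul]; abel
    rw [this]
    refine add_mem (Submodule.subset_span ⟨x, y, hxy, ?_⟩) ih
    exact (aux_memL ρ V).2 ⟨_, hV _ _ hv, rfl⟩

theorem aux_sup (hV : ∀ σ, ∀ v ∈ V, ρ σ v ∈ V) : auxW ρ V ⊔ auxInv ρ V = V := by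
  apply le_antisymm
  · exact sup_le (aux_W_le ρ hV) (fun x hx => hx.1)
  intro v hv
  set N : k := (Fintype.card (Equiv.Perm (Fin n)) : k) with hN
  have hN0 : N ≠ 0 := by rw [hN]; exact_mod_cast Fintype.card_ne_zero
  have h1 : v = -(N⁻¹ • ∑ σ, (ρ σ v - v)) + N⁻¹ • ∑ σ, ρ σ v := by
    rw [Finset.sum_sub_distrib, Finset.sum_const, Finset.card_univ, ← Nat.cast_smul_eq_nsmul k,
      smul_sub, smul_smul, ← hN, inv_mul_cancel₀ hN0, one_smul]
    abel
  rw [h1]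
  refine Submodule.add_mem_sup (neg_mem (Submodule.smul_mem _ _ (sum_mem fun σ _ =>
    aux_sub_mem_W ρ hV σ hv))) ⟨Submodule.smul_mem _ _ (sum_mem fun σ _ => hV σ v hv), ?_⟩
  intro τ
  rw [map_smul, map_sum]
  congr 1
  refine Fintype.sum_equiv (Equiv.mulLeft τ) _ _ ?_
  intro σ
  rw [Equiv.coe_mulLeft, aux_mul]

theorem aux_disj (hV : ∀ σ, ∀ v ∈ V, ρ σ v ∈ V) : Disjoint (auxW ρ V) (auxInv ρ V) := by
  rw [Submodule.disjoint_def]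
  intro x hx hx'
  have h0 : ∑ σ, ρ σ x = 0 := by
    clear hx'
    induction hx using Submodule.span_induction with
    | mem x hx =>
      obtain ⟨i, j, hij, h⟩ := hx
      have h2 : ∑ σ, ρ σ x = ∑ σ, ρ (σ * Equiv.swap i j) x :=
        (Fintype.sum_equiv (Equiv.mulRight (Equiv.swap i j)) _ _ (fun σ => rfl)).symm
      have h3 : ∑ σ, ρ (σ * Equiv.swap i j) x = - ∑ σ, ρ σ x := by
        rw [← Finset.sum_neg_distrib]
        refine Finset.sum_congr rfl fun σ _ => ?_
        rw [aux_mul, aux_L_neg ρ h, map_neg]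
      rw [h3] at h2
      have h4 : (2 : k) • ∑ σ, ρ σ x = 0 := by
        rw [two_smul]; nth_rewrite 1 [h2]; abel
      exact (smul_eq_zero.1 h4).resolve_left two_ne_zero
    | zero => simp
    | add x y _ _ hx hy => simp only [map_add, Finset.sum_add_distrib, hx, hy, add_zero]
    | smul c x _ hx => simp only [map_smul, ← Finset.smul_sum, hx, smul_zero]
  have h1 : ∑ σ : Equiv.Perm (Fin n), ρ σ x = (Fintype.card (Equiv.Perm (Fin n)) : k) • x := by
    rw [Finset.sum_congr rfl (fun σ _ => hx'.2 σ), Finset.sum_const, Finset.card_univ,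
      Nat.cast_smul_eq_nsmul]
  rw [h1] at h0
  exact (smul_eq_zero.1 h0).resolve_left (by exact_mod_cast Fintype.card_ne_zero)

theorem aux_inv_of_swaps {v : M} (h : ∀ i j, i ≠ j → ρ (Equiv.swap i j) v = v)
    (σ : Equiv.Perm (Fin n)) : ρ σ v = v := by
  induction σ using Equiv.Perm.swap_induction_on with
  | one => exact aux_one ρ v
  | swap_mul f x y hxy ih => rw [aux_mul, ih, h x y hxy]

theorem aux_trans {p q i j : Fin n} (hpq : p ≠ q) (hij : i ≠ j) :
    ∃ σ : Equiv.Perm (Fin n), σ p = i ∧ σ q = j := by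
  refine ⟨Equiv.swap (Equiv.swap p i q) j * Equiv.swap p i, ?_, ?_⟩
  · rw [Equiv.Perm.mul_apply, Equiv.swap_apply_left, Equiv.swap_apply_of_ne_of_ne _ hij]
    intro h
    have := congrArg (Equiv.swap p i) h
    rw [Equiv.swap_apply_right, Equiv.swap_apply_self] at this
    exact hpq this
  · rw [Equiv.Perm.mul_apply, Equiv.swap_apply_left]

theorem aux_trans3 {p q r i j l : Fin n} (hpq : p ≠ q) (hpr : p ≠ r) (hqr : q ≠ r)
    (hij : i ≠ j) (hil : i ≠ l) (hjl : j ≠ l) :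
    ∃ σ : Equiv.Perm (Fin n), σ p = i ∧ σ q = j ∧ σ r = l := by
  obtain ⟨σ, h1, h2⟩ := aux_trans hpq hij
  have hi : i ≠ σ r := by rw [← h1]; exact fun h => hpr (σ.injective h)
  have hj : j ≠ σ r := by rw [← h2]; exact fun h => hqr (σ.injective h)
  refine ⟨Equiv.swap (σ r) l * σ, ?_, ?_, ?_⟩
  · rw [Equiv.Perm.mul_apply, h1, Equiv.swap_apply_of_ne_of_ne hi hil]
  · rw [Equiv.Perm.mul_apply, h2, Equiv.swap_apply_of_ne_of_ne hj hjl]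
  · rw [Equiv.Perm.mul_apply, Equiv.swap_apply_left]

/-- irreducibility of `W` -/
theorem aux_irred (hV : ∀ σ, ∀ v ∈ V, ρ σ v ∈ V) (H : ∀ i j, i ≠ j → ∀ x ∈ auxL ρ V i j, ∀ y ∈ auxL ρ V i j, x ≠ 0 →
      ∃ c : k, y = c • x) (U : Submodule k M) (hU : U ≤ auxW ρ V)
    (hUs : ∀ σ, ∀ u ∈ U, ρ σ u ∈ U) : U = ⊥ ∨ U = auxW ρ V := by
  by_cases h : ∀ u ∈ U, ∀ i j, i ≠ j → ρ (Equiv.swap i j) u = u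
  · left
    rw [eq_bot_iff]
    intro u hu
    exact (Submodule.disjoint_def.1 (aux_disj ρ hV)) u (hU hu)
      ⟨aux_W_le ρ hV (hU hu), aux_inv_of_swaps ρ (h u hu)⟩
  · right
    push Not at h
    obtain ⟨u, hu, i, j, hij, hne⟩ := h
    refine le_antisymm hU (Submodule.span_le.2 ?_)
    rintro x ⟨p, q, hpq, hx⟩
    obtain ⟨σ, rfl, rfl⟩ := aux_trans hij hpq
    have hm : ρ (Equiv.swap i j) u - u ∈ auxL ρ V i j :=
      (aux_memL ρ V).2 ⟨u, aux_W_le ρ hV (hU hu), rfl⟩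
    obtain ⟨c, rfl⟩ := H _ _ hpq _ (aux_L_conj ρ hV σ hm) _ hx (aux_ne ρ σ (sub_ne_zero.2 hne))
    exact U.smul_mem _ (hUs _ _ (sub_mem (hUs _ _ hu) hu))

end Rep

section Main

variable {k : Type*} [Field k] [CharZero k] {M : Type*} [AddCommGroup M] [Module k M] {n : ℕ}

theorem aux_stab2 (ρ : Equiv.Perm (Fin n) →* Module.End k M) {p q : Fin n} {a : M}
    (h : ∀ i j, i ≠ p → i ≠ q → j ≠ p → j ≠ q → i ≠ j → ρ (Equiv.swap i j) a = a)
    (σ : Equiv.Perm (Fin n)) (hp : σ p = p) (hq : σ q = q) : ρ σ a = a := by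
  have key : ∀ τ : Equiv.Perm {x : Fin n // x ≠ p ∧ x ≠ q}, ρ (Equiv.Perm.ofSubtype τ) a = a := by
    intro τ
    induction τ using Equiv.Perm.swap_induction_on with
    | one => rw [map_one]; exact aux_one ρ a
    | swap_mul f x y hxy ih =>
      rw [map_mul, aux_mul, ih, Equiv.Perm.ofSubtype_swap_eq]
      exact h _ _ x.2.1 x.2.2 y.2.1 y.2.2 (fun h => hxy (Subtype.ext h))
  have h1 : ∀ x, (σ x ≠ p ∧ σ x ≠ q) ↔ (x ≠ p ∧ x ≠ q) := by
    intro x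
    constructor
    · rintro ⟨h1, h2⟩
      exact ⟨by rintro rfl; exact h1 hp, by rintro rfl; exact h2 hq⟩
    · rintro ⟨h1, h2⟩
      exact ⟨fun h => h1 (σ.injective (h.trans hp.symm)), fun h => h2 (σ.injective (h.trans hq.symm))⟩
  have := key (σ.subtypePerm h1)
  rwa [Equiv.Perm.ofSubtype_subtypePerm] at this
  intro x hx
  exact ⟨by rintro rfl; exact hx hp, by rintro rfl; exact hx hq⟩

/-- the permutation-representation data for the standard case -/
theorem aux_std (ρ : Equiv.Perm (Fin n) →* Module.End k M) {V : Submodule k M}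
    (hV : ∀ σ, ∀ v ∈ V, ρ σ v ∈ V)
    (H : ∀ i j, i ≠ j → ∀ x ∈ auxL ρ V i j, ∀ y ∈ auxL ρ V i j, x ≠ 0 → ∃ c : k, y = c • x)
    (hno : ∀ i j l, i ≠ j → i ≠ l → j ≠ l → ∀ x ∈ auxL ρ V i j, x ∈ auxL ρ V j l → x = 0)
    {p q : Fin n} (hpq : p ≠ q) {a : M} (ha : a ∈ auxL ρ V p q) (ha0 : a ≠ 0)
    (hst : ∀ i j, i ≠ p → i ≠ q → j ≠ p → j ≠ q → i ≠ j → ρ (Equiv.swap i j) a = a) :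
    ∃ f : Fin n → M, (∀ σ i, ρ σ (f i) = f (σ i)) ∧ (∀ i j, i ≠ j → f i ≠ f j) ∧ ∀ i, f i ∈ V := by
  have haV : a ∈ V := aux_L_le ρ hV _ _ ha
  have hs := aux_L_neg ρ ha
  have step : ∀ r, r ≠ p → r ≠ q → ρ (Equiv.swap p q) (ρ (Equiv.swap q r) a) =
      ρ (Equiv.swap q r) a - a := by
    intro r hrp hrq
    set b := ρ (Equiv.swap q r) a with hb
    have hbpr : b ∈ auxL ρ V p r := by
      have := aux_L_conj ρ hV (Equiv.swap q r) ha
      rwa [Equiv.swap_apply_left, Equiv.swap_apply_of_ne_of_ne hpq hrp.symm] at this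
    have hsb : ρ (Equiv.swap p q) b ∈ auxL ρ V q r := by
      have := aux_L_conj ρ hV (Equiv.swap p q) hbpr
      rwa [Equiv.swap_apply_left, Equiv.swap_apply_of_ne_of_ne hrp hrq] at this
    have hd : b - a ∈ auxL ρ V q r := (aux_memL ρ V).2 ⟨a, haV, rfl⟩
    obtain ⟨c, hc⟩ := H q r hrq.symm _ hsb _ hd (aux_ne ρ _ (aux_ne ρ _ ha0))
    have hc2 := congrArg (ρ (Equiv.swap p q)) hc
    rw [map_smul, aux_ss, map_sub, hs, sub_neg_eq_add] at hc2
    have hsb2 : ρ (Equiv.swap p q) b = c • b - a := by rw [← hc2]; abel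
    by_cases hc1 : c = 1
    · rw [hsb2, hc1, one_smul]
    · exfalso
      rw [hsb2] at hc
      have h3 : (1 - c) • ((1 + c) • b - a) = 0 := by
        have : (1 - c) • ((1 + c) • b - a) = (b - a) - c • (c • b - a) := by module
        rw [this, ← hc, sub_self]
      have h4 := (smul_eq_zero.1 h3).resolve_left (sub_ne_zero.2 (Ne.symm hc1))
      have h5 : a = (1 + c) • b := (sub_eq_zero.1 h4).symm
      have h6 : a ∈ auxL ρ V p r := by rw [h5]; exact Submodule.smul_mem _ _ hbpr
      rw [aux_L_symm] at ha
      exact ha0 (hno q p r hpq.symm hrq.symm hrp.symm a ha h6)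
  -- the vector fixed by the stabilizer of p
  set f0 : M := ∑ r ∈ Finset.univ.erase p, ρ (Equiv.swap q r) a with hf0
  have hf0V : f0 ∈ V := sum_mem fun r _ => hV _ _ haV
  have hf0st : ∀ σ : Equiv.Perm (Fin n), σ p = p → ρ σ f0 = f0 := by
    intro σ hσ
    rw [hf0, map_sum]
    refine Finset.sum_bij (fun r _ => σ r) ?_ ?_ ?_ ?_
    · intro r hr
      simp only [Finset.mem_erase, Finset.mem_univ, and_true] at hr ⊢
      exact fun h => hr (σ.injective (h.trans hσ.symm))
    · intro r _ s _ h; exact σ.injective h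
    · intro s hs
      simp only [Finset.mem_erase, Finset.mem_univ, and_true] at hs
      refine ⟨σ⁻¹ s, ?_, by simp⟩
      simp only [Finset.mem_erase, Finset.mem_univ, and_true]
      intro h; apply hs; rw [← hσ, ← h]; simp
    · intro r hr
      simp only [Finset.mem_erase, Finset.mem_univ, and_true] at hr
      have hσr : σ r ≠ p := fun h => hr (σ.injective (h.trans hσ.symm))
      have := aux_stab2 ρ hst (Equiv.swap q (σ r) * (σ * Equiv.swap q r))
        (by rw [Equiv.Perm.mul_apply, Equiv.Perm.mul_apply,
              Equiv.swap_apply_of_ne_of_ne hpq (Ne.symm hr), hσ,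
              Equiv.swap_apply_of_ne_of_ne hpq (Ne.symm hσr)])
        (by rw [Equiv.Perm.mul_apply, Equiv.Perm.mul_apply, Equiv.swap_apply_left,
              Equiv.swap_apply_right])
      rw [aux_mul, aux_mul] at this
      have h2 := congrArg (ρ (Equiv.swap q (σ r))) this
      rwa [aux_ss] at h2
  have hf0s : ρ (Equiv.swap p q) f0 ≠ f0 := by
    have hq : q ∈ Finset.univ.erase p := by simp [hpq.symm]
    have e1 : f0 = a + ∑ r ∈ (Finset.univ.erase p).erase q, ρ (Equiv.swap q r) a := by
      rw [hf0, ← Finset.add_sum_erase _ _ hq, Equiv.swap_self]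
      congr 1
      exact aux_one ρ a
    have e2 : ρ (Equiv.swap p q) f0 = f0 - ((2 + ((Finset.univ.erase p).erase q).card : ℕ) : k) • a := by
      rw [e1, map_add, hs, map_sum]
      have : ∑ r ∈ (Finset.univ.erase p).erase q, ρ (Equiv.swap p q) (ρ (Equiv.swap q r) a) =
          ∑ r ∈ (Finset.univ.erase p).erase q, (ρ (Equiv.swap q r) a - a) := by
        refine Finset.sum_congr rfl fun r hr => ?_
        simp only [Finset.mem_erase, Finset.mem_univ, and_true] at hr
        exact step r hr.2 hr.1
      rw [this, Finset.sum_sub_distrib, Finset.sum_const, ← Nat.cast_smul_eq_nsmul k]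
      push_cast
      rw [add_smul, two_smul]
      abel
    rw [e2]
    intro h
    have h3 := sub_eq_self.1 h
    refine ha0 ((smul_eq_zero.1 h3).resolve_left ?_)
    exact_mod_cast (by omega)
  have heq : ∀ (σ : Equiv.Perm (Fin n)) i, ρ σ (ρ (Equiv.swap p i) f0) = ρ (Equiv.swap p (σ i)) f0 := by
    intro σ i
    have := hf0st (Equiv.swap p (σ i) * (σ * Equiv.swap p i)) (by simp)
    rw [aux_mul, aux_mul] at this
    have h2 := congrArg (ρ (Equiv.swap p (σ i))) this
    rwa [aux_ss] at h2
  refine ⟨fun i => ρ (Equiv.swap p i) f0, heq, ?_, fun i => hV _ _ hf0V⟩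
  intro i j hij h
  simp only at h
  obtain ⟨σ, h1, h2⟩ := aux_trans hij hpq
  have h3 := congrArg (ρ σ) h
  rw [heq, heq, h1, h2, Equiv.swap_self] at h3
  exact hf0s (h3.symm.trans (aux_one ρ f0))

/-- the classification -/
theorem aux_classify (ρ : Equiv.Perm (Fin n) →* Module.End k M) {V : Submodule k M}
    (hV : ∀ σ, ∀ v ∈ V, ρ σ v ∈ V)
    (H : ∀ i j, i ≠ j → ∀ x ∈ auxL ρ V i j, ∀ y ∈ auxL ρ V i j, x ≠ 0 → ∃ c : k, y = c • x) :
    (auxW ρ V = ⊥) ∨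
    (∃ g, g ≠ 0 ∧ auxW ρ V = Submodule.span k {g} ∧
      ∀ σ, ρ σ g = ((Equiv.Perm.sign σ : ℤ) : k) • g) ∨
    (0 < n ∧ ∃ f : Fin n → M, (∀ σ i, ρ σ (f i) = f (σ i)) ∧ (∀ i j, i ≠ j → f i ≠ f j) ∧
      auxW ρ V = Submodule.span k {x | ∃ i j, i ≠ j ∧ x = f i - f j}) ∨
    (n = 4 ∧ Module.finrank k (auxW ρ V) = 2) := by
  by_cases hall : ∀ i j, i ≠ j → ∀ x ∈ auxL ρ V i j, x = 0
  · left
    rw [eq_bot_iff]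
    refine Submodule.span_le.2 ?_
    rintro x ⟨i, j, hij, hx⟩
    exact hall i j hij x hx
  right
  push Not at hall
  obtain ⟨p, q, hpq, a, ha, ha0⟩ := hall
  have haV : a ∈ V := aux_L_le ρ hV _ _ ha
  by_cases hadj : ∀ i j l, i ≠ j → i ≠ l → j ≠ l → ∀ x ∈ auxL ρ V i j, x ∈ auxL ρ V j l → x = 0
  swap
  · left
    push Not at hadj
    obtain ⟨i, j, l, hij, hil, hjl, x, hx1, hx2, hx0⟩ := hadj
    have hall : ∀ i j l, i ≠ j → i ≠ l → j ≠ l → auxL ρ V i j ≤ auxL ρ V j l := by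
      intro i' j' l' h1 h2 h3 y hy
      obtain ⟨σ, rfl, rfl, rfl⟩ := aux_trans3 hij hil hjl h1 h2 h3
      obtain ⟨c, rfl⟩ := H _ _ h1 _ (aux_L_conj ρ hV σ hx1) _ hy (aux_ne ρ σ hx0)
      exact Submodule.smul_mem _ _ (aux_L_conj ρ hV σ hx2)
    have h1 : ∀ i, i ≠ p → a ∈ auxL ρ V p i := by
      intro i hi
      by_cases hiq : i = q
      · rw [hiq]; exact ha
      · rw [aux_L_symm] at ha
        exact hall q p i hpq.symm (Ne.symm hiq) (Ne.symm hi) ha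
    have h2 : ∀ i j, i ≠ j → a ∈ auxL ρ V i j := by
      intro i j hij
      by_cases hi : i = p
      · rw [hi]; exact h1 j (by rintro rfl; exact hij hi)
      by_cases hj : j = p
      · rw [hj, aux_L_symm]; exact h1 i hi
      exact hall p i j (Ne.symm hi) (Ne.symm hj) hij (h1 i hi)
    refine ⟨a, ha0, ?_, ?_⟩
    · apply le_antisymm
      · refine Submodule.span_le.2 ?_
        rintro x ⟨i, j, hij, hx⟩
        obtain ⟨c, rfl⟩ := H i j hij a (h2 i j hij) x hx ha0
        exact Submodule.smul_mem _ _ (Submodule.mem_span_singleton_self a)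
      · rw [Submodule.span_singleton_le_iff_mem]
        exact Submodule.subset_span ⟨p, q, hpq, ha⟩
    · intro σ
      induction σ using Equiv.Perm.swap_induction_on with
      | one => rw [aux_one]; simp
      | swap_mul f x y hxy ih =>
        rw [aux_mul, ih, map_smul, aux_L_neg ρ (h2 x y hxy), Equiv.Perm.sign_mul,
          Equiv.Perm.sign_swap hxy]
        simp
  right
  by_cases hst : ∀ i j, i ≠ p → i ≠ q → j ≠ p → j ≠ q → i ≠ j → ρ (Equiv.swap i j) a = a
  · left
    obtain ⟨f, hf1, hf2, hf3⟩ := aux_std ρ hV H hadj hpq ha ha0 hst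
    have hfL : ∀ i j, i ≠ j → f i - f j ∈ auxL ρ V i j := by
      intro i j hij
      refine (aux_memL ρ V).2 ⟨f j, hf3 j, ?_⟩
      rw [hf1, Equiv.swap_apply_right]
    refine ⟨Nat.pos_of_ne_zero (by rintro rfl; exact p.elim0), f, hf1, hf2, le_antisymm ?_ ?_⟩
    · refine Submodule.span_le.2 ?_
      rintro x ⟨i, j, hij, hx⟩
      obtain ⟨c, rfl⟩ := H i j hij _ (hfL i j hij) x hx (sub_ne_zero.2 (hf2 i j hij))
      exact Submodule.smul_mem _ _ (Submodule.subset_span ⟨i, j, hij, rfl⟩)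
    · apply Submodule.span_mono
      rintro x ⟨i, j, hij, rfl⟩
      exact ⟨i, j, hij, hfL i j hij⟩
  right
  push Not at hst
  obtain ⟨i, j, hip, hiq, hjp, hjq, hij, hne⟩ := hst
  have haij : a ∈ auxL ρ V i j := by
    apply aux_L_of_neg ρ haV
    have h1 := aux_L_conj ρ hV (Equiv.swap i j) ha
    rw [Equiv.swap_apply_of_ne_of_ne hip.symm hjp.symm,
      Equiv.swap_apply_of_ne_of_ne hiq.symm hjq.symm] at h1
    obtain ⟨c, hc⟩ := H p q hpq a ha _ h1 ha0
    have h2 := congrArg (ρ (Equiv.swap i j)) hc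
    rw [aux_ss, map_smul, hc, smul_smul] at h2
    have h3 : (1 - c * c) • a = 0 := by rw [sub_smul, one_smul, ← h2, sub_self]
    have h4 := (smul_eq_zero.1 h3).resolve_right ha0
    have h5 : (1 - c) * (1 + c) = 0 := by linear_combination h4
    rcases mul_eq_zero.1 h5 with h6 | h6
    · exfalso; apply hne; rw [hc, ← sub_eq_zero.1 h6, one_smul]
    · rw [hc, eq_neg_of_add_eq_zero_right h6, neg_smul, one_smul]
  have hex : ∀ m, m = p ∨ m = q ∨ m = i ∨ m = j := by
    intro m
    by_contra hm
    push Not at hm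
    obtain ⟨hmp, hmq, hmi, hmj⟩ := hm
    have h1 := aux_L_conj ρ hV (Equiv.swap j m) ha
    rw [Equiv.swap_apply_of_ne_of_ne hjp.symm hmp.symm,
      Equiv.swap_apply_of_ne_of_ne hjq.symm hmq.symm] at h1
    have h2 := aux_L_conj ρ hV (Equiv.swap j m) haij
    rw [Equiv.swap_apply_of_ne_of_ne hij hmi.symm, Equiv.swap_apply_left] at h2
    obtain ⟨c, hc⟩ := H p q hpq _ h1 a ha (aux_ne ρ _ ha0)
    have h3 : a ∈ auxL ρ V i m := by rw [hc]; exact Submodule.smul_mem _ _ h2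
    rw [aux_L_symm] at haij
    exact ha0 (hadj j i m hij.symm (Ne.symm hmj) (Ne.symm hmi) a haij h3)
  have hn : n = 4 := by
    have : (Finset.univ : Finset (Fin n)) = {p, q, i, j} := by
      ext m; simpa using hex m
    have h2 := congrArg Finset.card this
    rw [Finset.card_univ, Fintype.card_fin] at h2
    rw [h2, Finset.card_insert_of_notMem (by simp [hpq, hip.symm, hjp.symm]),
      Finset.card_insert_of_notMem (by simp [hiq.symm, hjq.symm]), Finset.card_pair hij]
  refine ⟨hn, ?_⟩
  set b := ρ (Equiv.swap q i) a with hb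
  have hb0 : b ≠ 0 := aux_ne ρ _ ha0
  have hbpi : b ∈ auxL ρ V p i := by
    have := aux_L_conj ρ hV (Equiv.swap q i) ha
    rwa [Equiv.swap_apply_left, Equiv.swap_apply_of_ne_of_ne hpq hip.symm] at this
  have hbqj : b ∈ auxL ρ V q j := by
    have := aux_L_conj ρ hV (Equiv.swap q i) haij
    rwa [Equiv.swap_apply_right, Equiv.swap_apply_of_ne_of_ne hjq hij.symm] at this
  have hd : b - a ∈ auxL ρ V q i := (aux_memL ρ V).2 ⟨a, haV, rfl⟩
  have ha' : a ∈ auxL ρ V q p := by rw [aux_L_symm]; exact ha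
  have hd0 : b - a ≠ 0 := by
    intro h
    rw [sub_eq_zero.1 h] at hbpi
    exact ha0 (hadj q p i hpq.symm hiq.symm hip.symm a ha' hbpi)
  have hdpj : b - a ∈ auxL ρ V p j := by
    have h1 := aux_L_conj ρ hV (Equiv.swap q j) ha
    rw [Equiv.swap_apply_left, Equiv.swap_apply_of_ne_of_ne hpq hjp.symm] at h1
    have h2 := aux_L_conj ρ hV (Equiv.swap q j) haij
    rw [Equiv.swap_apply_right, Equiv.swap_apply_of_ne_of_ne hiq hij, aux_L_symm] at h2
    obtain ⟨c, hc⟩ := H q i hiq.symm _ h2 _ hd (aux_ne ρ _ ha0)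
    rw [hc]; exact Submodule.smul_mem _ _ h1
  set S := Submodule.span k {a, b} with hS
  have haS : a ∈ S := Submodule.subset_span (by simp)
  have hbS : b ∈ S := Submodule.subset_span (by simp)
  have hgen : ∀ r s x, r ≠ s → x ∈ auxL ρ V r s → x ≠ 0 → x ∈ S → auxL ρ V r s ≤ S := by
    intro r s x hrs hx hx0 hxS y hy
    obtain ⟨c, rfl⟩ := H r s hrs x hx y hy hx0
    exact S.smul_mem _ hxS
  have s1 := hgen p q a hpq ha ha0 haS
  have s2 := hgen i j a hij haij ha0 haS
  have s3 := hgen p i b hip.symm hbpi hb0 hbS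
  have s4 := hgen q j b hjq.symm hbqj hb0 hbS
  have s5 := hgen q i _ hiq.symm hd hd0 (sub_mem hbS haS)
  have s6 := hgen p j _ hjp.symm hdpj hd0 (sub_mem hbS haS)
  have s1' := s1; have s2' := s2; have s3' := s3; have s4' := s4; have s5' := s5; have s6' := s6
  rw [aux_L_symm] at s1' s2' s3' s4' s5' s6'
  have hWS : auxW ρ V = S := by
    apply le_antisymm
    · refine Submodule.span_le.2 ?_
      rintro x ⟨r, s, hrs, hx⟩
      suffices auxL ρ V r s ≤ S from this hx
      rcases hex r with rfl | rfl | rfl | rfl <;> rcases hex s with rfl | rfl | rfl | rfl <;>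
        first | assumption | exact absurd rfl hrs
    · refine Submodule.span_le.2 ?_
      rintro x (rfl | rfl)
      · exact Submodule.subset_span ⟨p, q, hpq, ha⟩
      · exact Submodule.subset_span ⟨p, i, hip.symm, hbpi⟩
  rw [hWS, hS]
  have hli : LinearIndependent k ![a, b] := by
    rw [LinearIndependent.pair_iff' ha0]
    intro c hc
    have : b ∈ auxL ρ V q p := by rw [← hc]; exact Submodule.smul_mem _ _ ha'
    exact hb0 (hadj q p i hpq.symm hiq.symm hip.symm b this hbpi)
  have := finrank_span_eq_card hli
  rw [Matrix.range_cons_cons_empty] at this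
  simpa using this

end Main

section Final

variable {k : Type*} [Field k] [CharZero k] {M : Type*} [AddCommGroup M] [Module k M] {n : ℕ}

/-- the sum-zero subspace -/
def auxH0 (k : Type*) [Field k] (n : ℕ) : Submodule k (Fin n → k) :=
  LinearMap.ker (Fintype.linearCombination k (fun _ : Fin n => (1 : k)))

theorem aux_mem_H0 (c : Fin n → k) : c ∈ auxH0 k n ↔ ∑ i, c i = 0 := by
  simp [auxH0, Fintype.linearCombination_apply]

theorem aux_finrank_H0 (hn : 0 < n) : Module.finrank k (auxH0 k n) = n - 1 := by
  have h1 := LinearMap.finrank_range_add_finrank_ker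
    (Fintype.linearCombination k (fun _ : Fin n => (1 : k)))
  have h2 : LinearMap.range (Fintype.linearCombination k (fun _ : Fin n => (1 : k))) = ⊤ := by
    rw [LinearMap.range_eq_top]
    intro x
    refine ⟨Pi.single ⟨0, hn⟩ x, ?_⟩
    simp [Fintype.linearCombination_apply]
  rw [h2, finrank_top, Module.finrank_self, Module.finrank_fin_fun] at h1
  unfold auxH0
  omega

theorem aux_map_H0 (hn : 0 < n) (f : Fin n → M) :
    (auxH0 k n).map (Fintype.linearCombination k f) =
      Submodule.span k {x | ∃ i j, i ≠ j ∧ x = f i - f j} := by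
  apply le_antisymm
  · rintro _ ⟨c, hc, rfl⟩
    have hc := (aux_mem_H0 c).1 hc
    have : Fintype.linearCombination k f c = ∑ i, c i • (f i - f ⟨0, hn⟩) := by
      simp only [smul_sub, Finset.sum_sub_distrib, ← Finset.sum_smul, hc, zero_smul, sub_zero,
        Fintype.linearCombination_apply]
    rw [this]
    refine sum_mem fun i _ => Submodule.smul_mem _ _ ?_
    by_cases hi : i = ⟨0, hn⟩
    · rw [hi, sub_self]; exact zero_mem _
    · exact Submodule.subset_span ⟨_, _, hi, rfl⟩
  · refine Submodule.span_le.2 ?_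
    rintro x ⟨i, j, hij, rfl⟩
    refine ⟨Pi.single i 1 - Pi.single j 1, ?_, ?_⟩
    · rw [SetLike.mem_coe, aux_mem_H0]; simp
    · rw [map_sub]; simp

theorem aux_lc_equiv (ρ : Equiv.Perm (Fin n) →* Module.End k M) {f : Fin n → M}
    (hf : ∀ σ i, ρ σ (f i) = f (σ i)) (σ : Equiv.Perm (Fin n)) (c : Fin n → k) :
    ρ σ (Fintype.linearCombination k f c) = Fintype.linearCombination k f (c ∘ (σ⁻¹ : Equiv.Perm (Fin n))) := by
  simp only [Fintype.linearCombination_apply, map_sum, map_smul, hf]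
  refine Fintype.sum_equiv σ _ _ ?_
  intro i
  simp

theorem aux_lc_inj (ρ : Equiv.Perm (Fin n) →* Module.End k M) {f : Fin n → M} (hn : 0 < n)
    (hf : ∀ σ i, ρ σ (f i) = f (σ i)) (hne : ∀ i j, i ≠ j → f i ≠ f j) :
    Function.Injective ((Fintype.linearCombination k f).domRestrict (auxH0 k n)) := by
  rw [← LinearMap.ker_eq_bot, LinearMap.ker_eq_bot']
  rintro ⟨c, hc⟩ h
  have h : Fintype.linearCombination k f c = 0 := h
  have hc := (aux_mem_H0 c).1 hc
  have hconst : ∀ i j, c i = c j := by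
    intro i j
    by_contra hcij
    have hij : i ≠ j := by rintro rfl; exact hcij rfl
    have h1 := aux_lc_equiv ρ hf (Equiv.swap i j) c
    rw [h, map_zero] at h1
    have h2 : Fintype.linearCombination k f (c ∘ ((Equiv.swap i j)⁻¹ : Equiv.Perm (Fin n))) -
        Fintype.linearCombination k f c = (c j - c i) • (f i - f j) := by
      rw [← map_sub]
      have : c ∘ ((Equiv.swap i j)⁻¹ : Equiv.Perm (Fin n)) - c =
          (c j - c i) • (Pi.single i 1 - Pi.single j 1) := by
        ext l
        by_cases hi : l = i
        · subst hi; simp [hij]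
        by_cases hj : l = j
        · subst hj; simp [hi]
        simp [hi, hj, Equiv.swap_apply_of_ne_of_ne]
      rw [this, map_smul, map_sub]; simp
    rw [← h1, h, sub_self] at h2
    rcases smul_eq_zero.1 h2.symm with h3 | h3
    · exact hcij (sub_eq_zero.1 h3).symm
    · exact hne i j hij (sub_eq_zero.1 h3)
  apply Subtype.ext
  ext i
  have : (n : k) * c i = 0 := by
    rw [← hc, Finset.sum_congr rfl (fun j _ => hconst j i)]; simp
  exact (mul_eq_zero.1 this).resolve_left (by exact_mod_cast hn.ne')

/-- the isomorphism of the sum zero space with the span of differences -/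
theorem aux_e1 (ρ : Equiv.Perm (Fin n) →* Module.End k M) {f : Fin n → M} (hn : 0 < n)
    (hf : ∀ σ i, ρ σ (f i) = f (σ i)) (hne : ∀ i j, i ≠ j → f i ≠ f j)
    (W : Submodule k M) (hW : W = Submodule.span k {x | ∃ i j, i ≠ j ∧ x = f i - f j}) :
    ∃ e : auxH0 k n ≃ₗ[k] W, ∀ c, (e c : M) = Fintype.linearCombination k f c := by
  rw [← aux_map_H0 (k := k) hn] at hW
  subst hW
  let g := (Fintype.linearCombination k f).domRestrict (auxH0 k n)
  have hg : ∀ c, g c ∈ (auxH0 k n).map (Fintype.linearCombination k f) :=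
    fun c => Submodule.mem_map_of_mem c.2
  refine ⟨LinearEquiv.ofBijective (g.codRestrict _ hg) ⟨?_, ?_⟩, fun c => rfl⟩
  · intro x y hxy
    exact aux_lc_inj ρ hn hf hne (congrArg Subtype.val hxy)
  · rintro ⟨_, c, hc, rfl⟩
    exact ⟨⟨c, hc⟩, rfl⟩

/-- the permutation action on polynomials -/
def auxRho (k : Type*) [Field k] (n : ℕ) :
    Equiv.Perm (Fin n) →* Module.End k (MvPolynomial (Fin n) k) where
  toFun σ := (rename (R := k) σ).toLinearMap
  map_one' := by
    apply LinearMap.ext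
    intro p
    exact rename_id_apply p
  map_mul' σ τ := by
    apply LinearMap.ext
    intro p
    exact (rename_rename (τ : Fin n → Fin n) σ p).symm

theorem aux_rho_apply (σ : Equiv.Perm (Fin n)) (p : MvPolynomial (Fin n) k) :
    auxRho k n σ p = rename σ p := rfl

theorem aux_hook : HookModule k n 1 =
    Submodule.span k {x | ∃ i j : Fin n, i ≠ j ∧ x = X i - X j} := by
  unfold HookModule
  have hfil : Finset.univ.filter (fun p : Fin (1 + 1) × Fin (1 + 1) => p.1 < p.2) = {(0, 1)} := by
    decide
  congr 1
  ext x
  constructor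
  · rintro ⟨a, rfl⟩
    refine ⟨a 0, a 1, fun h => by simpa using a.injective h, ?_⟩
    simp only [hfil, Finset.prod_singleton]
  · rintro ⟨i, j, hij, rfl⟩
    refine ⟨⟨![i, j], ?_⟩, ?_⟩
    · intro x y h
      fin_cases x <;> fin_cases y <;> simp_all
    · simp only [hfil, Finset.prod_singleton]
      rfl

theorem aux_eqiso (hn : 0 < n) {f : Fin n → MvPolynomial (Fin n) k}
    (hf : ∀ σ i, auxRho k n σ (f i) = f (σ i)) (hne : ∀ i j, i ≠ j → f i ≠ f j)
    (W : Submodule k (MvPolynomial (Fin n) k))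
    (hW : W = Submodule.span k {x | ∃ i j, i ≠ j ∧ x = f i - f j}) :
    EqIso W (HookModule k n 1) ∧ Module.finrank k W = n - 1 := by
  obtain ⟨e1, he1⟩ := aux_e1 (auxRho k n) hn hf hne W hW
  have hX : ∀ (σ : Equiv.Perm (Fin n)) i, auxRho k n σ (X i) = X (σ i) :=
    fun σ i => rename_X _ _
  obtain ⟨e2, he2⟩ := aux_e1 (auxRho k n) hn hX (fun i j hij h => hij (X_injective h))
    (HookModule k n 1) aux_hook
  refine ⟨⟨e1.symm.trans e2, ?_⟩, ?_⟩
  · intro σ v w hvw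
    obtain ⟨c, rfl⟩ := e1.surjective v
    obtain ⟨d, rfl⟩ := e1.surjective w
    simp only [LinearEquiv.trans_apply, LinearEquiv.symm_apply_apply]
    rw [he1, he1, ← aux_rho_apply, aux_lc_equiv _ hf] at hvw
    rw [he2, he2, ← aux_rho_apply, aux_lc_equiv _ hX]
    have hmem : (c : Fin n → k) ∘ (σ⁻¹ : Equiv.Perm (Fin n)) ∈ auxH0 k n := by
      rw [aux_mem_H0]
      have := (aux_mem_H0 (c : Fin n → k)).1 c.2
      rw [← this]
      exact Fintype.sum_equiv σ⁻¹ _ _ (fun i => rfl)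
    have := aux_lc_inj (auxRho k n) hn hf hne (a₁ := d) (a₂ := ⟨_, hmem⟩) hvw
    rw [this]
  · rw [← e1.finrank_eq, aux_finrank_H0 hn]

theorem aux_list (U : Submodule k M) [FiniteDimensional k U] :
    ∃ fs : List M, (∀ f ∈ fs, f ∈ U) ∧ U = Submodule.span k {x | x ∈ fs} ∧
      Module.finrank k U = fs.length := by
  let b := Module.finBasis k U
  refine ⟨List.ofFn fun i => (b i : M), ?_, ?_, by simp⟩
  · intro f hf
    rw [List.mem_ofFn] at hf
    obtain ⟨i, rfl⟩ := hf
    exact (b i).2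
  · have h1 : {x | x ∈ List.ofFn fun i => (b i : M)} = U.subtype '' (Set.range b) := by
      ext x; simp
    rw [h1, ← Submodule.map_span, b.span_eq, Submodule.map_top, Submodule.range_subtype]

end Final

/-- If `I ⊆ R = k[x_1,…,x_n]` is a (nonzero) `S_n`-stable
complete intersection ideal, then `I/mI` — equivalently any equivariant lift
`V` of it, with `V ⊕ mI = I` — is isomorphic as an `S_n`-representation to one
of:
(I) a direct sum of `m` trivial representations `S^{(n)}`, `1 ≤ m ≤ n`;
(II) one alternating representation `S^{(1^n)}` plus at most `n-1` trivials;
(III) one standard representation `S^{(n-1,1)}` plus at most one trivial;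
(IV) for `n = 4` only, one copy of `S^{(2,2)}` (the unique 2-dimensional
irreducible of `S_4`) plus at most two trivials. -/
theorem stmt6 {k : Type*} [Field k] [CharZero k] {n : ℕ}
    (I : Ideal (MvPolynomial (Fin n) k)) (hI0 : I ≠ ⊥)
    (hIstab : ∀ σ : Equiv.Perm (Fin n), ∀ p ∈ I, rename (⇑σ) p ∈ I)
    (hIhom : ∀ p ∈ I, ∀ d, homogeneousComponent d p ∈ I)
    (hCI : IsCompleteIntersection I)
    -- `V` is an equivariant graded lift of `I/mI`:
    (V : Submodule k (MvPolynomial (Fin n) k))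
    (hVI : V ≤ I.restrictScalars k)
    (hVstab : Stable V)
    (hVgr : ∀ p ∈ V, ∀ d, homogeneousComponent d p ∈ V)
    (hdisj : Disjoint V ((Ideal.span (Set.range (X : Fin n → MvPolynomial (Fin n) k)) * I).restrictScalars k))
    (hsup : V ⊔ (Ideal.span (Set.range (X : Fin n → MvPolynomial (Fin n) k)) * I).restrictScalars k
      = I.restrictScalars k) :
    -- Case I: a direct sum of `m` trivial representations, `1 ≤ m ≤ n`:
    (∃ fs : List (MvPolynomial (Fin n) k), (∀ f ∈ fs, f.IsSymmetric) ∧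
      V = Submodule.span k {x | x ∈ fs} ∧ Module.finrank k V = fs.length ∧
      1 ≤ fs.length ∧ fs.length ≤ n) ∨
    -- Case II: one alternating representation plus at most `n-1` trivials:
    (∃ (g : MvPolynomial (Fin n) k) (fs : List (MvPolynomial (Fin n) k)),
      (∀ σ : Equiv.Perm (Fin n), rename (⇑σ) g = ((Equiv.Perm.sign σ : ℤ) : k) • g) ∧
      g ≠ 0 ∧ (∀ f ∈ fs, f.IsSymmetric) ∧
      V = Submodule.span k ({g} ∪ {x | x ∈ fs}) ∧
      Module.finrank k V = fs.length + 1 ∧ fs.length ≤ n - 1) ∨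
    -- Case III: one standard representation plus at most one trivial:
    (∃ (W : Submodule k (MvPolynomial (Fin n) k)) (fs : List (MvPolynomial (Fin n) k)),
      W ≤ V ∧ Stable W ∧ EqIso W (HookModule k n 1) ∧
      (∀ f ∈ fs, f.IsSymmetric) ∧
      V = W ⊔ Submodule.span k {x | x ∈ fs} ∧
      Module.finrank k V = (n - 1) + fs.length ∧ fs.length ≤ 1) ∨
    -- Case IV (`n = 4`): one copy of `S^{(2,2)}` plus at most two trivials:
    (n = 4 ∧
      ∃ (W : Submodule k (MvPolynomial (Fin n) k)) (fs : List (MvPolynomial (Fin n) k)),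
      W ≤ V ∧ Stable W ∧ Module.finrank k W = 2 ∧
      (∀ U ≤ W, Stable U → U = ⊥ ∨ U = W) ∧
      (∀ f ∈ fs, f.IsSymmetric) ∧
      V = W ⊔ Submodule.span k {x | x ∈ fs} ∧
      Module.finrank k V = 2 + fs.length ∧ fs.length ≤ 2) := by
  obtain ⟨rs, hrs, hrsI⟩ := hCI
  have hIne : I ≠ ⊤ := by
    intro h
    apply hrs.top_ne_smul
    have : Ideal.ofList rs = ⊤ := hrsI.trans h
    rw [this]; simp
  have hc := aux_le_m I hIne hIhom
  obtain ⟨hfd, hfr⟩ := aux_finrank_le rs I hrsI V hVI hdisj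
  have hspan := aux_span_eq I V hVI hVgr hsup
  have hht : (Module.finrank k V : ℕ∞) ≤ I.height := by
    have := aux_length_le_height rs hrs.toIsWeaklyRegular
    rw [hrsI] at this
    exact le_trans (by exact_mod_cast hfr) this
  have hVn : Module.finrank k V ≤ n := by
    have := hht.trans (aux_finrank_le_n I hc)
    exact_mod_cast this
  have hV0 : 1 ≤ Module.finrank k V := by
    rw [Nat.one_le_iff_ne_zero]
    intro h0
    rw [Submodule.finrank_eq_zero] at h0
    apply hI0
    rw [← hspan, h0]; simp
  set ρ := auxRho k n with hρ
  have hVs : ∀ σ, ∀ v ∈ V, ρ σ v ∈ V := hVstab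
  have H : ∀ i j, i ≠ j → ∀ x ∈ auxL ρ V i j, ∀ y ∈ auxL ρ V i j, x ≠ 0 → ∃ c : k, y = c • x := by
    intro i j _ x hx y hy hx0
    have h1 : Module.finrank k (auxL ρ V i j) ≤ 1 :=
      aux_swap i j I hc V hspan (hVstab _) hht
    have : FiniteDimensional k (auxL ρ V i j) :=
      Submodule.finiteDimensional_of_le (aux_L_le ρ hVs i j)
    obtain ⟨v, hv⟩ := finrank_le_one_iff.1 h1
    obtain ⟨c, hc⟩ := hv ⟨x, hx⟩
    obtain ⟨d, hd⟩ := hv ⟨y, hy⟩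
    have hc := congrArg Subtype.val hc
    have hd := congrArg Subtype.val hd
    simp only [Submodule.coe_smul] at hc hd
    have hc0 : c ≠ 0 := by
      rintro rfl; rw [zero_smul] at hc; exact hx0 hc.symm
    refine ⟨d * c⁻¹, ?_⟩
    rw [← hc, ← hd, smul_smul, mul_assoc, inv_mul_cancel₀ hc0, mul_one]
  have hWV := aux_W_le ρ hVs
  have hIV : auxInv ρ V ≤ V := fun x hx => hx.1
  have : FiniteDimensional k (auxW ρ V) := Submodule.finiteDimensional_of_le hWV
  have : FiniteDimensional k (auxInv ρ V) := Submodule.finiteDimensional_of_le hIV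
  have hsupV := aux_sup ρ hVs
  have hdim : Module.finrank k V = Module.finrank k (auxW ρ V) + Module.finrank k (auxInv ρ V) := by
    have := Submodule.finrank_sup_add_finrank_inf_eq (auxW ρ V) (auxInv ρ V)
    rw [(aux_disj ρ hVs).eq_bot, finrank_bot, add_zero, hsupV] at this
    exact this
  obtain ⟨fs, hfs1, hfs2, hfs3⟩ := aux_list (auxInv ρ V)
  have hsym : ∀ f ∈ fs, f.IsSymmetric := fun f hf σ => (hfs1 f hf).2 σ
  rcases aux_classify ρ hVs H with h | ⟨g, hg0, hg1, hg2⟩ | ⟨hn, f, hf1, hf2, hf3⟩ | ⟨hn, h2⟩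
  · left
    rw [h, finrank_bot, zero_add] at hdim
    rw [h, bot_sup_eq] at hsupV
    refine ⟨fs, hsym, by rw [← hfs2, hsupV], by rw [hdim, hfs3], by omega, by omega⟩
  · right; left
    have h1 : Module.finrank k (auxW ρ V) = 1 := by rw [hg1, finrank_span_singleton hg0]
    refine ⟨g, fs, hg2, hg0, hsym, ?_, by omega, by omega⟩
    rw [Submodule.span_union, ← hg1, ← hfs2, hsupV]
  · right; right; left
    obtain ⟨h1, h2⟩ := aux_eqiso hn hf1 hf2 _ hf3
    refine ⟨auxW ρ V, fs, hWV, fun σ p hp => aux_W_stable ρ hVs σ hp, h1, hsym, ?_, by omega,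
      by omega⟩
    rw [← hfs2, hsupV]
  · right; right; right
    refine ⟨hn, auxW ρ V, fs, hWV, fun σ p hp => aux_W_stable ρ hVs σ hp, h2, ?_, hsym, ?_,
      by omega, by omega⟩
    · intro U hU hUs
      exact aux_irred ρ hVs H U hU hUs
    · rw [← hfs2, hsupV]

end
end

section
/- In R = k[x_1,x_2,x_3,x_4] over a field k of characteristic zero, the sequence e_1^3, e_1^2 - e_2, e_3, e_4 is a regular sequence, where e_i denotes the i-th elementary symmetric polynomial. -/
section helpers
open Polynomial

lemma mem_map_C_iff_map {A : Type*} [CommRing A] (I : Ideal A) (p : A[X]) :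
    p ∈ I.map (Polynomial.C : A →+* A[X]) ↔ p.map (Ideal.Quotient.mk I) = 0 := by
  rw [Ideal.mem_map_C_iff, Polynomial.ext_iff]
  simp [Ideal.Quotient.eq_zero_iff_mem]

lemma monic_reg {A : Type*} [CommRing A] (I : Ideal A) {q : A[X]} (hq : q.Monic) (p : A[X])
    (h : q * p ∈ I.map (Polynomial.C : A →+* A[X])) : p ∈ I.map (Polynomial.C : A →+* A[X]) := by
  rw [mem_map_C_iff_map] at *
  rw [Polynomial.map_mul] at h
  exact ((hq.map _).mul_right_eq_zero_iff).1 h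

lemma base_reg {A : Type*} [CommRing A] (I : Ideal A) {q : A[X]} (hq : q.Monic) (g : A)
    (hg : ∀ a, g * a ∈ I → a ∈ I) (p : A[X])
    (h : Polynomial.C g * p ∈ I.map (Polynomial.C : A →+* A[X]) ⊔ Ideal.span {q}) :
    p ∈ I.map (Polynomial.C : A →+* A[X]) ⊔ Ideal.span {q} := by
  obtain ⟨i, hi, j, hj, hij⟩ := Submodule.mem_sup.1 h
  obtain ⟨u, rfl⟩ := Ideal.mem_span_singleton.1 hj
  rw [mem_map_C_iff_map] at hi
  have hqm := hq.map (Ideal.Quotient.mk I)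
  have h1 : Polynomial.C (Ideal.Quotient.mk I g) * p.map (Ideal.Quotient.mk I)
      = q.map (Ideal.Quotient.mk I) * u.map (Ideal.Quotient.mk I) := by
    have := congrArg (Polynomial.map (Ideal.Quotient.mk I)) hij
    simpa [hi] using this.symm
  have h2 : (Ideal.Quotient.mk I g) • (p.map (Ideal.Quotient.mk I) %ₘ q.map (Ideal.Quotient.mk I))
      = 0 := by
    rw [← Polynomial.smul_modByMonic, Polynomial.smul_eq_C_mul, h1]
    exact (Polynomial.modByMonic_eq_zero_iff_dvd hqm).2 ⟨_, rfl⟩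
  have h3 : p.map (Ideal.Quotient.mk I) %ₘ q.map (Ideal.Quotient.mk I) = 0 := by
    ext n
    have h4 := congrArg (fun r => Polynomial.coeff r n) h2
    simp only [Polynomial.coeff_smul, smul_eq_mul, Polynomial.coeff_zero] at h4 ⊢
    obtain ⟨a, ha⟩ := Ideal.Quotient.mk_surjective
      ((p.map (Ideal.Quotient.mk I) %ₘ q.map (Ideal.Quotient.mk I)).coeff n)
    rw [← ha] at h4 ⊢
    rw [← map_mul, Ideal.Quotient.eq_zero_iff_mem] at h4
    exact Ideal.Quotient.eq_zero_iff_mem.2 (hg a h4)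
  obtain ⟨v, hv⟩ := (Polynomial.modByMonic_eq_zero_iff_dvd hqm).1 h3
  obtain ⟨w, rfl⟩ := Polynomial.map_surjective _ Ideal.Quotient.mk_surjective v
  refine Submodule.mem_sup.2 ⟨p - q * w, ?_, q * w, Ideal.mem_span_singleton.2 ⟨_, rfl⟩, by ring⟩
  rw [mem_map_C_iff_map]
  simp [hv]

/-- A sealed copy of the polynomial ring `A[X]` (sealed to keep instance search in towers cheap). -/
def PolT (A : Type*) [CommRing A] : Type _ := Polynomial A

noncomputable instance (A : Type*) [CommRing A] : CommRing (PolT A) :=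
  inferInstanceAs (CommRing (Polynomial A))

section PolT
variable {A : Type*} [CommRing A]

noncomputable def cc : A →+* PolT A := (Polynomial.C : A →+* A[X])

variable (A) in
noncomputable def vv : PolT A := (Polynomial.X : A[X])

noncomputable def liftT {S : Type*} [CommRing S] (f : A →+* S) (s : S) : PolT A →+* S :=
  (Polynomial.eval₂RingHom f s : A[X] →+* S)

@[simp] lemma liftT_cc {S : Type*} [CommRing S] (f : A →+* S) (s : S) (a : A) :
    liftT f s (cc a) = f a := Polynomial.eval₂_C f s

@[simp] lemma liftT_vv {S : Type*} [CommRing S] (f : A →+* S) (s : S) :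
    liftT f s (vv A) = s := Polynomial.eval₂_X f s

lemma hom_extT {S : Type*} [CommRing S] {f g : PolT A →+* S} (h1 : f.comp cc = g.comp cc)
    (h2 : f (vv A) = g (vv A)) : f = g :=
  Polynomial.ringHom_ext' (f := (f : A[X] →+* S)) (g := (g : A[X] →+* S)) h1 h2

def MonT (p : PolT A) : Prop := Polynomial.Monic (p : A[X])

lemma monT_two (u w : A) : MonT (vv A ^ 2 + (cc u * vv A + cc w)) := by
  have key : Polynomial.Monic ((X : A[X]) ^ 2 + (C u * X + C w)) := by
    refine Polynomial.monic_X_pow_add (n := 2) ?_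
    refine lt_of_le_of_lt (b := (1 : WithBot ℕ)) ?_ (by norm_num)
    compute_degree
  exact key

lemma monT_three (t u w : A) : MonT (vv A ^ 3 + (cc t * vv A ^ 2 + cc u * vv A + cc w)) := by
  have key : Polynomial.Monic ((X : A[X]) ^ 3 + (C t * X ^ 2 + C u * X + C w)) := by
    refine Polynomial.monic_X_pow_add (n := 3) ?_
    refine lt_of_le_of_lt (b := (2 : WithBot ℕ)) ?_ (by norm_num)
    compute_degree
  exact key

lemma monT_four (t u : A) : MonT (vv A ^ 4 + (cc t * vv A ^ 3 + cc u * vv A ^ 2)) := by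
  have key : Polynomial.Monic ((X : A[X]) ^ 4 + (C t * X ^ 3 + C u * X ^ 2)) := by
    refine Polynomial.monic_X_pow_add (n := 4) ?_
    refine lt_of_le_of_lt (b := (3 : WithBot ℕ)) ?_ (by norm_num)
    compute_degree
  exact key

lemma monT_X_three : MonT (vv A ^ 3) := by
  have key : Polynomial.Monic ((X : A[X]) ^ 3) := by
    exact Polynomial.monic_X_pow 3
  exact key

lemma monT_reg (I : Ideal A) {q : PolT A} (hq : MonT q) (p : PolT A)
    (h : q * p ∈ I.map (cc : A →+* PolT A)) : p ∈ I.map (cc : A →+* PolT A) :=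
  monic_reg I (q := (q : A[X])) hq p h

lemma baseT_reg (I : Ideal A) {q : PolT A} (hq : MonT q) (g : A)
    (hg : ∀ a, g * a ∈ I → a ∈ I) (p : PolT A)
    (h : cc g * p ∈ I.map (cc : A →+* PolT A) ⊔ Ideal.span {q}) :
    p ∈ I.map (cc : A →+* PolT A) ⊔ Ideal.span {q} :=
  base_reg I (q := (q : A[X])) hq g hg p h

lemma ccT_reg (g : A) (hg : ∀ a, g * a = 0 → a = 0) (p : PolT A) (h : cc g * p = 0) : p = 0 := by
  suffices key : ∀ p : A[X], C g * p = 0 → p = 0 from key p h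
  clear h p
  intro p h
  refine Polynomial.ext fun n => ?_
  have := congrArg (fun r => Polynomial.coeff r n) h
  simp only [Polynomial.coeff_C_mul, Polynomial.coeff_zero] at this
  exact hg _ this

lemma monT_reg_zero {q : PolT A} (hq : MonT q) (p : PolT A) (h : q * p = 0) : p = 0 :=
  (Polynomial.Monic.mul_right_eq_zero_iff (p := (q : A[X])) (q := (p : A[X])) hq).1 h

end PolT

variable (k : Type*) [CommRing k]

/-- The tower `k[y][a][b][c]`. -/
abbrev Tow := PolT (PolT (PolT (PolT k)))

noncomputable def ty : Tow k := cc (cc (cc (vv k)))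
noncomputable def ta : Tow k := cc (cc (vv _))
noncomputable def tb : Tow k := cc (vv _)
noncomputable def tc : Tow k := vv _

noncomputable def polyR : PolT (PolT (PolT k)) :=
  vv _ ^ 3 + (cc (vv _ - cc (vv _)) * vv _ ^ 2 + cc (vv _ ^ 2 - cc (vv _) * vv _ + cc (vv _) ^ 2) * vv _
    + cc (vv _ ^ 3 - cc (vv _) * vv _ ^ 2 + cc (vv _) ^ 2 * vv _))

noncomputable def polyS : PolT (PolT k) :=
  vv _ ^ 4 + (cc (- vv _) * vv _ ^ 3 + cc (vv _ ^ 2) * vv _ ^ 2)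

noncomputable def polyQ : Tow k :=
  vv _ ^ 2 + (cc (vv _ + cc (vv _) - cc (cc (vv _))) * vv _
    + cc (vv _ ^ 2 + vv _ * cc (vv _) + cc (vv _) ^ 2 - cc (cc (vv _)) * (vv _ + cc (vv _))
      + cc (cc (vv _)) ^ 2))

lemma monic_R : MonT (polyR k) := monT_three _ _ _

lemma monic_S : MonT (polyS k) := monT_four _ _

lemma monic_Q : MonT (polyQ k) := monT_two _ _

lemma tow_one (p : Tow k) (h : ty k ^ 3 * p = 0) : p = 0 := by
  have e : ty k ^ 3 = cc (cc (cc (vv k ^ 3))) := by simp [ty]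
  rw [e] at h
  exact ccT_reg _ (ccT_reg _ (ccT_reg _ (monT_reg_zero monT_X_three))) p h

lemma tow_two (p : Tow k) (h : polyQ k * p ∈ Ideal.span {ty k ^ 3}) :
    p ∈ Ideal.span {ty k ^ 3} := by
  have e : Ideal.span {ty k ^ 3} =
    (Ideal.span {(cc (cc (vv k))) ^ 3}).map cc := by
    simp [Ideal.map_span, ty]
  rw [e] at h ⊢
  exact monT_reg _ (monic_Q k) p h

lemma tow_three (p : Tow k)
    (h : cc (polyR k) * p ∈ Ideal.span {ty k ^ 3} ⊔ Ideal.span {polyQ k}) :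
    p ∈ Ideal.span {ty k ^ 3} ⊔ Ideal.span {polyQ k} := by
  have e : Ideal.span {ty k ^ 3} =
    ((Ideal.span {(cc (vv k)) ^ 3}).map cc).map cc := by
    simp [Ideal.map_span, ty]
  rw [e] at h ⊢
  exact baseT_reg _ (monic_Q k) _ (fun a ha => monT_reg _ (monic_R k) a ha) p h

lemma tow_four (p : Tow k)
    (h : cc (cc (polyS k)) * p ∈ Ideal.span {ty k ^ 3} ⊔ Ideal.span {cc (polyR k)} ⊔
      Ideal.span {polyQ k}) :
    p ∈ Ideal.span {ty k ^ 3} ⊔ Ideal.span {cc (polyR k)} ⊔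
      Ideal.span {polyQ k} := by
  have e : Ideal.span {ty k ^ 3} ⊔ Ideal.span {cc (polyR k)} =
    ((((Ideal.span {(vv k) ^ 3}).map cc).map cc) ⊔ Ideal.span {polyR k}).map cc := by
    simp [Ideal.map_span, Ideal.map_sup, ty]
  rw [e] at h ⊢
  exact baseT_reg _ (monic_Q k) _ (fun a ha => baseT_reg _ (monic_R k) _
    (fun a ha => monT_reg _ (monic_S k) a ha) a ha) p h

noncomputable def toTow : MvPolynomial (Fin 4) k →+* Tow k :=
  MvPolynomial.eval₂Hom (cc.comp (cc.comp (cc.comp cc)))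
    ![ta k, tb k, tc k, ty k - ta k - tb k - tc k]

noncomputable def ofTow : Tow k →+* MvPolynomial (Fin 4) k :=
  liftT (liftT (liftT (liftT MvPolynomial.C (.X 0 + .X 1 + .X 2 + .X 3)) (.X 0)) (.X 1)) (.X 2)

noncomputable def towEquiv : MvPolynomial (Fin 4) k ≃+* Tow k :=
  RingEquiv.ofRingHom (toTow k) (ofTow k)
    (by
      refine hom_extT (hom_extT (hom_extT (hom_extT ?_ ?_) ?_) ?_) ?_
      · ext x
        simp [toTow, ofTow]
      all_goals simp [toTow, ofTow, ta, tb, tc, ty])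
    (by
      refine MvPolynomial.ringHom_ext (fun r => ?_) (fun i => ?_)
      · simp [toTow, ofTow]
      · fin_cases i <;> simp [toTow, ofTow, ta, tb, tc, ty]
        ring)

lemma esymm1 : MvPolynomial.esymm (Fin 4) k 1 = .X 0 + .X 1 + .X 2 + .X 3 := by
  simp [MvPolynomial.esymm_one, Fin.sum_univ_four]

lemma esymm2 : MvPolynomial.esymm (Fin 4) k 2 = .X 0 * .X 1 + .X 0 * .X 2 + .X 0 * .X 3
    + .X 1 * .X 2 + .X 1 * .X 3 + .X 2 * .X 3 := by
  have : Finset.powersetCard 2 (Finset.univ : Finset (Fin 4)) =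
    {{0,1},{0,2},{0,3},{1,2},{1,3},{2,3}} := by decide
  rw [MvPolynomial.esymm, this]
  repeat rw [Finset.sum_insert (by decide)]
  rw [Finset.sum_singleton]
  repeat rw [Finset.prod_pair (by decide)]
  ring

lemma esymm3 : MvPolynomial.esymm (Fin 4) k 3 = .X 0 * .X 1 * .X 2 + .X 0 * .X 1 * .X 3
    + .X 0 * .X 2 * .X 3 + .X 1 * .X 2 * .X 3 := by
  have : Finset.powersetCard 3 (Finset.univ : Finset (Fin 4)) =
    {{0,1,2},{0,1,3},{0,2,3},{1,2,3}} := by decide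
  rw [MvPolynomial.esymm, this]
  repeat rw [Finset.sum_insert (by decide)]
  rw [Finset.sum_singleton]
  repeat rw [Finset.prod_insert (by decide)]
  repeat rw [Finset.prod_singleton]
  ring

lemma esymm4 : MvPolynomial.esymm (Fin 4) k 4 = .X 0 * .X 1 * .X 2 * .X 3 := by
  have : Finset.powersetCard 4 (Finset.univ : Finset (Fin 4)) = {Finset.univ} := by decide
  rw [MvPolynomial.esymm, this]
  simp [Fin.prod_univ_four]

lemma tow_X (i : Fin 4) : towEquiv k (.X i) =
    ![ta k, tb k, tc k, ty k - ta k - tb k - tc k] i := by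
  simp [towEquiv, toTow]

lemma img1 : towEquiv k (MvPolynomial.esymm (Fin 4) k 1 ^ 3) = ty k ^ 3 := by
  rw [esymm1]; simp [tow_X]

lemma img2 : towEquiv k (MvPolynomial.esymm (Fin 4) k 1 ^ 2 - MvPolynomial.esymm (Fin 4) k 2)
    = polyQ k := by
  rw [esymm1, esymm2]; simp [tow_X, ta, tb, tc, ty, polyQ]; ring

lemma img3 : towEquiv k (MvPolynomial.esymm (Fin 4) k 3) =
    (cc (polyR k) - polyQ k * (ta k + tb k)) := by
  rw [esymm3]; simp [tow_X, ta, tb, tc, ty, polyQ, polyR]; ring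

lemma img4 : towEquiv k (MvPolynomial.esymm (Fin 4) k 4) =
    (ta k * (cc (polyR k) - polyQ k * (ta k + tb k)) + ta k ^ 2 * polyQ k
      - cc (cc (polyS k))) := by
  rw [esymm4]; simp [tow_X, ta, tb, tc, ty, polyQ, polyR, polyS]; ring

lemma transfer {R S : Type*} [CommRing R] [CommRing S] (e : R ≃+* S) (I : Ideal R) (f : R)
    (J : Ideal S) (hJ : I.map (e : R →+* S) = J) (h : ∀ p, e f * p ∈ J → p ∈ J) :
    IsSMulRegular (R ⧸ (I • ⊤ : Ideal R)) f := by
  have key : ∀ x, x ∈ I ↔ e x ∈ J := by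
    intro x
    rw [← hJ]
    constructor
    · exact fun hx => Ideal.mem_map_of_mem (e : R →+* S) hx
    · intro hx
      obtain ⟨y, hy, hxy⟩ := (Ideal.mem_map_of_equiv e _).1 hx
      exact e.injective hxy ▸ hy
  rw [isSMulRegular_iff_right_eq_zero_of_smul]
  intro x hx
  obtain ⟨x, rfl⟩ := Submodule.Quotient.mk_surjective _ x
  rw [← Submodule.Quotient.mk_smul, Submodule.Quotient.mk_eq_zero] at hx
  rw [Submodule.Quotient.mk_eq_zero]
  simp only [smul_eq_mul, Ideal.mul_top] at hx ⊢
  rw [key] at hx ⊢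
  exact h _ (by simpa using hx)

end helpers

open MvPolynomial

/-- In `R = k[x_1,…,x_4]` over a field `k` of
characteristic zero, the sequence `e_1^3, e_1^2 - e_2, e_3, e_4` is a regular
sequence, where `e_i` denotes the `i`-th elementary symmetric polynomial. -/
theorem stmt14 {k : Type*} [Field k] [CharZero k] :
    RingTheory.Sequence.IsRegular (MvPolynomial (Fin 4) k)
      [(esymm (Fin 4) k 1) ^ 3,
       (esymm (Fin 4) k 1) ^ 2 - esymm (Fin 4) k 2,
       esymm (Fin 4) k 3,
       esymm (Fin 4) k 4] := by
  have hQ : polyQ k ∈ Ideal.span {ty k ^ 3} ⊔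
      Ideal.span {polyQ k} := Ideal.mem_sup_right (Ideal.mem_span_singleton_self _)
  refine ⟨⟨?_⟩, ?_⟩
  · intro i hi
    have hi' : i < 4 := hi
    interval_cases i
    · refine transfer (towEquiv k) _ _ ⊥ (by simp) ?_
      intro p hp
      simp only [List.getElem_cons_zero, img1, Ideal.mem_bot] at hp ⊢
      exact tow_one k p hp
    · refine transfer (towEquiv k) _ _ (J := Ideal.span {ty k ^ 3}) ?_ ?_
      · rw [← img1]; simp [Ideal.map_span]
      · intro p hp
        simp only [List.getElem_cons_zero, List.getElem_cons_succ, img2] at hp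
        exact tow_two k p hp
    · refine transfer (towEquiv k) _ _ (J := Ideal.span {ty k ^ 3} ⊔ Ideal.span {polyQ k}) ?_ ?_
      · rw [← img1, ← img2]; simp [Ideal.map_span, Ideal.map_sup]
      · intro p hp
        simp only [List.getElem_cons_zero, List.getElem_cons_succ, img3] at hp
        refine tow_three k p ?_
        have := Ideal.add_mem _ hp (Ideal.mul_mem_right ((ta k + tb k) * p) _ hQ)
        convert this using 1
        ring
    · refine transfer (towEquiv k) _ _ (J := Ideal.span {ty k ^ 3} ⊔ Ideal.span {cc (polyR k)} ⊔ Ideal.span {polyQ k}) ?_ ?_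
      · have : ∀ (I : Ideal (Tow k)) (r q t : Tow k), I ⊔ (Ideal.span {q} ⊔ Ideal.span {r - q * t}) = I ⊔ Ideal.span {r} ⊔ Ideal.span {q} := by
          intro I r q t
          rw [sup_assoc, ← Ideal.span_union, ← Ideal.span_union]
          congr 1
          apply le_antisymm <;> rw [Ideal.span_le] <;> rintro x (rfl | rfl)
          · exact Ideal.subset_span (by simp)
          · exact Ideal.sub_mem _ (Ideal.subset_span (by simp))
              (Ideal.mul_mem_right _ _ (Ideal.subset_span (by simp)))
          · have := Ideal.add_mem (Ideal.span ({q} ∪ {x - q * t})) (Ideal.subset_span (by simp : x - q * t ∈ _))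
              (Ideal.mul_mem_right t _ (Ideal.subset_span (by simp : q ∈ _)))
            simpa using this
          · exact Ideal.subset_span (by simp)
        rw [← this _ _ _ (ta k + tb k), ← img1, ← img3, ← img2]
        simp [Ideal.map_span, Ideal.map_sup]
      · intro p hp
        simp only [List.getElem_cons_zero, List.getElem_cons_succ, img4] at hp
        refine tow_four k p ?_
        set J := Ideal.span {ty k ^ 3} ⊔ Ideal.span {cc (polyR k)} ⊔ Ideal.span {polyQ k}
        have h1 : polyQ k ∈ J := Ideal.mem_sup_right (Ideal.mem_span_singleton_self _)
        have h2 : cc (polyR k) ∈ J :=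
          Ideal.mem_sup_left (Ideal.mem_sup_right (Ideal.mem_span_singleton_self _))
        rw [← Ideal.Quotient.eq_zero_iff_mem] at *
        simp only [map_mul, map_add, map_sub, map_pow, h1, h2] at hp ⊢
        linear_combination -hp
  · intro h
    have h1 : Ideal.ofList [(esymm (Fin 4) k 1) ^ 3,
       (esymm (Fin 4) k 1) ^ 2 - esymm (Fin 4) k 2,
       esymm (Fin 4) k 3, esymm (Fin 4) k 4] ≤ RingHom.ker (constantCoeff (R := k) (σ := Fin 4)) := by
      rw [Ideal.ofList, Ideal.span_le]
      intro x hx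
      simp only [List.mem_cons, List.not_mem_nil, or_false, Set.mem_ofPred_eq] at hx
      rcases hx with rfl | rfl | rfl | rfl <;>
        simp [RingHom.mem_ker, esymm1, esymm2, esymm3, esymm4]
    have h2 : (1 : MvPolynomial (Fin 4) k) ∈ RingHom.ker (constantCoeff (R := k) (σ := Fin 4)) := by
      apply h1
      rw [smul_eq_mul, Ideal.mul_top] at h
      rw [← h]; trivial
    simp [RingHom.mem_ker] at h2
end

section
/- In R = k[x_1,x_2,x_3,x_4] over a field k of characteristic zero, the polynomials e_1^2, e_2, e_3, v form a regular sequence, where v = ∏_{1≤i<j≤4}(x_i - x_j) is the Vandermonde determinant. -/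
open MvPolynomial

theorem regL {R : Type*} [CommRing R] (I : Ideal R) (f : R) (hf : ∀ a, f * a ∈ I → a ∈ I)
    (g : Polynomial R) (hg : g.Monic) (a : Polynomial R)
    (ha : Polynomial.C f * a ∈ I.map Polynomial.C ⊔ Ideal.span {g}) :
    a ∈ I.map Polynomial.C ⊔ Ideal.span {g} := by
  have key : Polynomial.C f * (a %ₘ g) ∈ I.map Polynomial.C := by
    obtain ⟨i, hi, j, hj, hij⟩ := Submodule.mem_sup.1 ha
    obtain ⟨q, rfl⟩ := Ideal.mem_span_singleton'.1 hj
    have h1 : (Polynomial.C f * a) %ₘ g = i %ₘ g := by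
      rw [← hij, Polynomial.add_modByMonic, (Polynomial.modByMonic_eq_zero_iff_dvd hg).2
        (Dvd.intro_left q rfl), add_zero]
    rw [← Polynomial.smul_eq_C_mul, ← Polynomial.smul_modByMonic, Polynomial.smul_eq_C_mul, h1]
    have h2 : (i %ₘ g).map (Ideal.Quotient.mk I) = 0 := by
      rw [Polynomial.map_modByMonic _ hg]
      have : i.map (Ideal.Quotient.mk I) = 0 := by
        ext n
        simpa [Ideal.Quotient.eq_zero_iff_mem] using Ideal.mem_map_C_iff.1 hi n
      rw [this, Polynomial.zero_modByMonic]
    rw [Ideal.mem_map_C_iff]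
    intro n
    have := congrArg (fun p => p.coeff n) h2
    simpa [Ideal.Quotient.eq_zero_iff_mem] using this
  have h3 : a %ₘ g ∈ I.map Polynomial.C := by
    rw [Ideal.mem_map_C_iff] at key ⊢
    intro n
    apply hf
    simpa using key n
  rw [← Polynomial.modByMonic_add_div a g]
  exact Submodule.add_mem_sup h3 (Ideal.mul_mem_right _ _ (Ideal.mem_span_singleton_self g))

theorem regM {R : Type*} [CommRing R] (I : Ideal R)
    (g : Polynomial R) (hg : g.Monic) (a : Polynomial R)
    (ha : g * a ∈ I.map Polynomial.C) : a ∈ I.map Polynomial.C := by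
  have hm : ∀ p : Polynomial R, p ∈ I.map Polynomial.C ↔ p.map (Ideal.Quotient.mk I) = 0 := by
    intro p
    rw [Ideal.mem_map_C_iff, Polynomial.ext_iff]
    simp [Ideal.Quotient.eq_zero_iff_mem]
  rw [hm] at ha ⊢
  rw [Polynomial.map_mul] at ha
  exact (hg.map _).mul_right_eq_zero_iff.1 ha


open scoped Polynomial in
theorem core {A : Type*} [CommRing A] (s : A) (S x y z : A[X][X][X]) (hs : S = Polynomial.C (Polynomial.C (Polynomial.C s)))
    (hx : x = Polynomial.C (Polynomial.C Polynomial.X)) (hy : y = Polynomial.C Polynomial.X) (hz : z = Polynomial.X) (g2 g3 h : A[X][X][X])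
    (h2 : g2 = z^2 + z*(x+y) + (x^2+x*y+y^2) - S*(x+y+z))
    (h3 : g3 = (y^3+y^2*x+y*x^2+x^3) - S*(x^2+x*y+y^2))
    (h4 : h = x^4 - S*x^3) :
    (∀ a, g2 * a ∈ Ideal.span {S^2} → a ∈ Ideal.span {S^2}) ∧
    (∀ a, g3 * a ∈ Ideal.span {S^2} ⊔ Ideal.span {g2} → a ∈ Ideal.span {S^2} ⊔ Ideal.span {g2}) ∧
    (∀ a, h * a ∈ Ideal.span {S^2} ⊔ Ideal.span {g3} ⊔ Ideal.span {g2} →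
      a ∈ Ideal.span {S^2} ⊔ Ideal.span {g3} ⊔ Ideal.span {g2}) := by
  have i0 : (Ideal.span {s^2}).map (Polynomial.C : A →+* A[X]) = Ideal.span {(Polynomial.C s)^2} := by
    rw [Ideal.map_span]; simp
  have i1 : (Ideal.span {(Polynomial.C s)^2}).map (Polynomial.C : A[X] →+* A[X][X]) = Ideal.span {(Polynomial.C (Polynomial.C s))^2} := by
    rw [Ideal.map_span]; simp
  have i2 : (Ideal.span {(Polynomial.C (Polynomial.C s))^2}).map (Polynomial.C : A[X][X] →+* A[X][X][X]) = Ideal.span {S^2} := by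
    rw [Ideal.map_span]; simp [hs]
  obtain ⟨g3', e3, m3⟩ : ∃ g3' : A[X][X], g3 = Polynomial.C g3' ∧ g3'.Monic := by
    refine ⟨Polynomial.X^3 + Polynomial.C (Polynomial.X - Polynomial.C s) * Polynomial.X^2 + Polynomial.C (Polynomial.X^2 - Polynomial.C s * Polynomial.X) * Polynomial.X + Polynomial.C (Polynomial.X^3 - Polynomial.C s * Polynomial.X^2), ?_, ?_⟩
    · rw [h3, hs, hx, hy]; simp only [map_add, map_sub, map_mul, map_pow]; ring
    · monicity!
  obtain ⟨h', e4, m4⟩ : ∃ h' : A[X], h = Polynomial.C (Polynomial.C h') ∧ h'.Monic := by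
    refine ⟨Polynomial.X^4 - Polynomial.C s * Polynomial.X^3, ?_, ?_⟩
    · rw [h4, hs, hx]; simp only [map_sub, map_mul, map_pow]
    · monicity!
  have m2 : g2.Monic := by
    have : g2 = Polynomial.X^2 + Polynomial.C (Polynomial.C Polynomial.X + Polynomial.X - Polynomial.C (Polynomial.C s)) * Polynomial.X +
        Polynomial.C (Polynomial.C Polynomial.X^2 + Polynomial.C Polynomial.X * Polynomial.X + Polynomial.X^2 - Polynomial.C (Polynomial.C s) * (Polynomial.C Polynomial.X + Polynomial.X)) := by
      rw [h2, hs, hx, hy, hz]; simp only [map_add, map_sub, map_mul, map_pow]; ring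
    rw [this]
    monicity!
  refine ⟨?_, ?_, ?_⟩
  · rw [← i2]; exact regM _ _ m2
  · rw [← i2, e3]
    refine regL _ _ ?_ _ m2
    rw [← i1]; exact regM _ _ m3
  · have i3 : Ideal.span {S^2} ⊔ Ideal.span {g3} =
        (Ideal.span {(Polynomial.C (Polynomial.C s))^2} ⊔ Ideal.span {g3'}).map (Polynomial.C : A[X][X] →+* A[X][X][X]) := by
      rw [Ideal.map_sup, i2, Ideal.map_span Polynomial.C {g3'}, Set.image_singleton, e3]
    rw [i3, e4]
    refine regL _ _ ?_ _ m2
    rw [← i1]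
    refine regL _ _ ?_ _ m3
    rw [← i0]; exact regM _ _ m4

theorem transfer_s15 {R T : Type*} [CommRing R] [CommRing T] (φ : R ≃+* T)
    (x0 x1 x2 x3 e1 e2 e3 e4 : R) (s x y z g2 g3 h : T)
    (h1 : e1 = x0 + x1 + x2 + x3)
    (h2 : e2 = x0 * x1 + x0 * x2 + x0 * x3 + x1 * x2 + x1 * x3 + x2 * x3)
    (h3 : e3 = x0 * x1 * x2 + x0 * x1 * x3 + x0 * x2 * x3 + x1 * x2 * x3)
    (h4 : e4 = x0 * x1 * x2 * x3)
    (f0 : φ x0 = x) (f1 : φ x1 = y) (f2 : φ x2 = z) (f3 : φ x3 = s - x - y - z)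
    (hg2 : g2 = z^2 + z*(x+y) + (x^2+x*y+y^2) - s*(x+y+z))
    (hg3 : g3 = (y^3+y^2*x+y*x^2+x^3) - s*(x^2+x*y+y^2))
    (hh : h = x^4 - s*x^3)
    (c2 : ∀ a, g2 * a ∈ Ideal.span {s^2} → a ∈ Ideal.span {s^2})
    (c3 : ∀ a, g3 * a ∈ Ideal.span {s^2} ⊔ Ideal.span {g2} →
      a ∈ Ideal.span {s^2} ⊔ Ideal.span {g2})
    (c4 : ∀ a, h * a ∈ Ideal.span {s^2} ⊔ Ideal.span {g3} ⊔ Ideal.span {g2} →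
      a ∈ Ideal.span {s^2} ⊔ Ideal.span {g3} ⊔ Ideal.span {g2}) :
    (∀ a, e2 * a ∈ Ideal.span {e1^2} → a ∈ Ideal.span {e1^2}) ∧
    (∀ a, e3 * a ∈ Ideal.span {e1^2, e2} → a ∈ Ideal.span {e1^2, e2}) ∧
    (∀ a, e4 * a ∈ Ideal.span {e1^2, e2, e3} → a ∈ Ideal.span {e1^2, e2, e3}) := by
  have E1 : φ e1 = s := by
    rw [h1]; simp only [map_add, f0, f1, f2, f3]; ring
  have E2 : φ e2 = -g2 := by
    rw [h2, hg2]; simp only [map_add, map_mul, f0, f1, f2, f3]; ring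
  have E3 : φ e3 = g3 - g2 * (x + y) := by
    rw [h3, hg2, hg3]; simp only [map_add, map_mul, f0, f1, f2, f3]; ring
  have E4 : φ e4 = -h + g2 * x^2 + (g3 - g2 * (x + y)) * x := by
    rw [h4, hh, hg2, hg3]; simp only [map_mul, f0, f1, f2, f3]; ring
  have tr : ∀ (I : Ideal R) a, a ∈ I ↔ φ a ∈ I.map φ := by
    intro I a
    refine ⟨Ideal.mem_map_of_mem _, fun hI => ?_⟩
    obtain ⟨b, hb, hab⟩ := (Ideal.mem_map_iff_of_surjective φ φ.surjective).1 hI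
    rwa [← φ.injective hab]
  have J1 : (Ideal.span {e1^2}).map φ = Ideal.span {s^2} := by
    rw [Ideal.map_span, Set.image_singleton, map_pow, E1]
  have J2 : (Ideal.span {e1^2, e2}).map φ = Ideal.span {s^2} ⊔ Ideal.span {g2} := by
    rw [Ideal.map_span, Set.image_pair, map_pow, E1, E2, Ideal.span_insert, Ideal.span_singleton_neg]
  have J3 : (Ideal.span {e1^2, e2, e3}).map φ =
      Ideal.span {s^2} ⊔ Ideal.span {g3} ⊔ Ideal.span {g2} := by
    rw [Ideal.map_span, Set.image_insert_eq, Set.image_pair, map_pow, E1, E2, E3,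
      Ideal.span_insert, Ideal.span_insert, Ideal.span_singleton_neg, sup_assoc]
    congr 1
    rw [← Ideal.span_insert, ← Ideal.span_insert, Set.pair_comm]
    apply le_antisymm
    · rw [Ideal.span_le]
      rintro w (rfl | rfl)
      · exact Ideal.mem_span_pair.2 ⟨1, -(x+y), by ring⟩
      · exact Ideal.mem_span_pair.2 ⟨0, 1, by ring⟩
    · rw [Ideal.span_le]
      rintro w (rfl | rfl)
      · exact Ideal.mem_span_pair.2 ⟨1, (x+y), by ring⟩
      · exact Ideal.mem_span_pair.2 ⟨0, 1, by ring⟩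
  refine ⟨fun a ha => ?_, fun a ha => ?_, fun a ha => ?_⟩
  · rw [tr, J1] at ha ⊢
    rw [map_mul, E2, neg_mul, neg_mem_iff] at ha
    exact c2 _ ha
  · rw [tr, J2] at ha ⊢
    rw [map_mul, E3] at ha
    refine c3 _ ?_
    have m : g2 ∈ Ideal.span {s^2} ⊔ Ideal.span {g2} :=
      Ideal.mem_sup_right (Ideal.mem_span_singleton_self _)
    convert add_mem ha (Ideal.mul_mem_right ((x + y) * φ a) _ m) using 1
    ring
  · rw [tr, J3] at ha ⊢
    rw [map_mul, E4] at ha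
    refine c4 _ ?_
    have m : g2 ∈ Ideal.span {s^2} ⊔ Ideal.span {g3} ⊔ Ideal.span {g2} :=
      Ideal.mem_sup_right (Ideal.mem_span_singleton_self _)
    have m' : g3 ∈ Ideal.span {s^2} ⊔ Ideal.span {g3} ⊔ Ideal.span {g2} :=
      Ideal.mem_sup_left (Ideal.mem_sup_right (Ideal.mem_span_singleton_self _))
    convert sub_mem (add_mem (Ideal.mul_mem_right ((x^2 - (x + y) * x) * φ a) _ m)
      (Ideal.mul_mem_right (x * φ a) _ m')) ha using 1
    ring

noncomputable section
set_option maxSynthPendingDepth 10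
variable (k : Type*) [CommRing k]
abbrev T1 := Polynomial (Polynomial k)
abbrev T2 := Polynomial (T1 k)
abbrev T3 := Polynomial (T2 k)

def sT : T3 k := Polynomial.C (Polynomial.C (Polynomial.C Polynomial.X))
def xT : T3 k := Polynomial.C (Polynomial.C Polynomial.X)
def yT : T3 k := Polynomial.C Polynomial.X
def zT : T3 k := Polynomial.X

def fwd : MvPolynomial (Fin 4) k →+* T3 k :=
  MvPolynomial.eval₂Hom (Polynomial.C.comp (Polynomial.C.comp (Polynomial.C.comp Polynomial.C)))
    ![xT k, yT k, zT k, sT k - xT k - yT k - zT k]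

def bwd : T3 k →+* MvPolynomial (Fin 4) k :=
  Polynomial.eval₂RingHom (Polynomial.eval₂RingHom (Polynomial.eval₂RingHom
    (Polynomial.eval₂RingHom MvPolynomial.C (X 0 + X 1 + X 2 + X 3)) (X 0)) (X 1)) (X 2)

def eqv : MvPolynomial (Fin 4) k ≃+* T3 k :=
  RingEquiv.ofRingHom (fwd k) (bwd k)
    (by
      apply Polynomial.ringHom_ext'
      · apply Polynomial.ringHom_ext'
        · apply Polynomial.ringHom_ext'
          · apply Polynomial.ringHom_ext'
            · apply RingHom.ext; intro x; simp [fwd, bwd]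
            · simp [fwd, bwd, sT, xT, yT, zT]
          · simp [fwd, bwd, sT, xT, yT, zT]
        · simp [fwd, bwd, sT, xT, yT, zT]
      · simp [fwd, bwd, sT, xT, yT, zT])
    (by
      apply MvPolynomial.ringHom_ext
      · intro r; simp [fwd, bwd]
      intro i
      simp only [fwd, bwd, RingHom.comp_apply, RingHom.id_apply, eval₂Hom_X']
      fin_cases i <;> simp [sT, xT, yT, zT]
      ring)

theorem core' (k : Type*) [CommRing k] (e1 e2 e3 e4 : MvPolynomial (Fin 4) k)
    (h1 : e1 = X 0 + X 1 + X 2 + X 3)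
    (h2 : e2 = X 0 * X 1 + X 0 * X 2 + X 0 * X 3 + X 1 * X 2 + X 1 * X 3 + X 2 * X 3)
    (h3 : e3 = X 0 * X 1 * X 2 + X 0 * X 1 * X 3 + X 0 * X 2 * X 3 + X 1 * X 2 * X 3)
    (h4 : e4 = X 0 * X 1 * X 2 * X 3) :
    (∀ a, e2 * a ∈ Ideal.span {e1^2} → a ∈ Ideal.span {e1^2}) ∧
    (∀ a, e3 * a ∈ Ideal.span {e1^2, e2} → a ∈ Ideal.span {e1^2, e2}) ∧
    (∀ a, e4 * a ∈ Ideal.span {e1^2, e2, e3} → a ∈ Ideal.span {e1^2, e2, e3}) := by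
  obtain ⟨c2, c3, c4⟩ := core (Polynomial.X : Polynomial k) (sT k) (xT k) (yT k) (zT k)
    rfl rfl rfl rfl _ _ _ rfl rfl rfl
  have f0 : eqv k (X 0) = xT k := by simp [eqv, fwd]
  have f1 : eqv k (X 1) = yT k := by simp [eqv, fwd]
  have f2 : eqv k (X 2) = zT k := by simp [eqv, fwd]
  have f3 : eqv k (X 3) = sT k - xT k - yT k - zT k := by simp [eqv, fwd]
  exact transfer_s15 (eqv k) _ _ _ _ e1 e2 e3 e4 _ _ _ _ _ _ _ h1 h2 h3 h4 f0 f1 f2 f3 rfl rfl rfl c2 c3 c4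
end

theorem e1eq (k : Type*) [CommRing k] : esymm (Fin 4) k 1 = X 0 + X 1 + X 2 + X 3 := by
  rw [esymm_one]; simp [Fin.sum_univ_four]

theorem e2eq (k : Type*) [CommRing k] : esymm (Fin 4) k 2 =
    X 0 * X 1 + X 0 * X 2 + X 0 * X 3 + X 1 * X 2 + X 1 * X 3 + X 2 * X 3 := by
  have : Finset.powersetCard 2 (Finset.univ : Finset (Fin 4)) =
    {{0,1},{0,2},{0,3},{1,2},{1,3},{2,3}} := by decide
  rw [esymm, this]
  repeat rw [Finset.sum_insert (by decide)]
  rw [Finset.sum_singleton]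
  repeat rw [Finset.prod_pair (by decide)]
  ring

theorem e3eq (k : Type*) [CommRing k] : esymm (Fin 4) k 3 =
    X 0 * X 1 * X 2 + X 0 * X 1 * X 3 + X 0 * X 2 * X 3 + X 1 * X 2 * X 3 := by
  have : Finset.powersetCard 3 (Finset.univ : Finset (Fin 4)) =
    {{0,1,2},{0,1,3},{0,2,3},{1,2,3}} := by decide
  rw [esymm, this]
  repeat rw [Finset.sum_insert (by decide)]
  rw [Finset.sum_singleton]
  repeat rw [Finset.prod_insert (by decide)]
  simp only [Finset.prod_singleton]
  ring

theorem veq (k : Type*) [CommRing k] :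
   (∏ p ∈ Finset.univ.filter (fun p : Fin 4 × Fin 4 => p.1 < p.2),
         (X p.1 - X p.2) : MvPolynomial (Fin 4) k) =
   (X 0 - X 1) * (X 0 - X 2) * (X 0 - X 3) * (X 1 - X 2) * (X 1 - X 3) * (X 2 - X 3) := by
  have : Finset.univ.filter (fun p : Fin 4 × Fin 4 => p.1 < p.2) =
    {(0,1),(0,2),(0,3),(1,2),(1,3),(2,3)} := by decide
  rw [this]
  repeat rw [Finset.prod_insert (by decide)]
  rw [Finset.prod_singleton]
  ring

theorem disc {R : Type*} [CommRing R] (a b c d e1 e2 e3 e4 : R)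
   (h1 : e1 = a + b + c + d) (h2 : e2 = a*b+a*c+a*d+b*c+b*d+c*d)
   (h3 : e3 = a*b*c+a*b*d+a*c*d+b*c*d) (h4 : e4 = a*b*c*d) :
   ((a-b)*(a-c)*(a-d)*(b-c)*(b-d)*(c-d))^2 = 256*e4^3 - 192*e1*e3*e4^2 -128*e2^2*e4^2 +144*e2*e3^2*e4 -27*e3^4+144*e1^2*e2*e4^2 -6*e1^2*e3^2*e4 -80*e1*e2^2*e3*e4+18*e1*e2*e3^3+16*e2^4*e4-4*e2^3*e3^2-27*e1^4*e4^2+18*e1^3*e2*e3*e4-4*e1^3*e3^3-4*e1^2*e2^3*e4+e1^2*e2^2*e3^2 := by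
  subst h1 h2 h3 h4
  ring

theorem stmt15 {k : Type*} [Field k] [CharZero k] :
    RingTheory.Sequence.IsRegular (MvPolynomial (Fin 4) k)
      [(esymm (Fin 4) k 1) ^ 2,
       esymm (Fin 4) k 2,
       esymm (Fin 4) k 3,
       ∏ p ∈ Finset.univ.filter (fun p : Fin 4 × Fin 4 => p.1 < p.2),
         (X p.1 - X p.2)] := by
  have q1 := e1eq k
  have q2 := e2eq k
  have q3 := e3eq k
  rw [veq k]
  set e1 := esymm (Fin 4) k 1
  set e2 := esymm (Fin 4) k 2
  set e3 := esymm (Fin 4) k 3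
  obtain ⟨c2, c3, c4⟩ := core' k e1 e2 e3 _ q1 q2 q3 rfl
  have hd := disc _ _ _ _ e1 e2 e3 _ q1 q2 q3 rfl
  set e4 : MvPolynomial (Fin 4) k := X 0 * X 1 * X 2 * X 3
  set v : MvPolynomial (Fin 4) k :=
    (X 0 - X 1) * (X 0 - X 2) * (X 0 - X 3) * (X 1 - X 2) * (X 1 - X 3) * (X 2 - X 3) with hv
  have c5 : ∀ a, v * a ∈ Ideal.span {e1^2, e2, e3} → a ∈ Ideal.span {e1^2, e2, e3} := by
    intro a ha
    have m1 : e1^2 ∈ Ideal.span {e1^2, e2, e3} := Ideal.subset_span (by simp)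
    have m2 : e2 ∈ Ideal.span {e1^2, e2, e3} := Ideal.subset_span (by simp)
    have m3 : e3 ∈ Ideal.span {e1^2, e2, e3} := Ideal.subset_span (by simp)
    have h256 : 256 * (e4 * (e4 * (e4 * a))) ∈ Ideal.span {e1^2, e2, e3} := by
      have hva := Ideal.mul_mem_left _ v ha
      have p1 := Ideal.mul_mem_right ((144*e2*e4^2-6*e3^2*e4-27*e1^2*e4^2+18*e1*e2*e3*e4
        -4*e1*e3^3-4*e2^3*e4+e2^2*e3^2) * a) _ m1
      have p2 := Ideal.mul_mem_right ((-128*e2*e4^2+144*e3^2*e4-80*e1*e2*e3*e4+18*e1*e3^3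
        +16*e2^3*e4-4*e2^2*e3^2) * a) _ m2
      have p3 := Ideal.mul_mem_right ((-192*e1*e4^2-27*e3^3) * a) _ m3
      convert sub_mem hva (add_mem p1 (add_mem p2 p3)) using 1
      linear_combination (-a) * hd
    have hC : (C (256⁻¹ : k) * 256 : MvPolynomial (Fin 4) k) = 1 := by
      have : (256 : MvPolynomial (Fin 4) k) = C 256 := (map_ofNat (C : k →+* MvPolynomial (Fin 4) k) 256).symm
      rw [this, ← C_mul]; norm_num
    apply c4; apply c4; apply c4
    have := Ideal.mul_mem_left _ (C (256⁻¹ : k)) h256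
    rwa [← mul_assoc, hC, one_mul] at this
  have ne : e1 ≠ 0 := by
    intro h0
    have := congrArg (eval (fun _ => (1 : k))) (q1.symm.trans h0)
    simp at this
    norm_num at this
  constructor
  · constructor
    intro i hi
    rw [isSMulRegular_quotient_iff_mem_of_smul_mem]
    simp only [smul_eq_mul, Ideal.mul_top]
    simp only [List.length_cons, List.length_nil] at hi
    interval_cases i
    · simpa [Ideal.ofList] using fun a h => h.resolve_left ne
    · simpa [Ideal.ofList] using c2
    · simpa [Ideal.ofList, Set.insert_def] using c3
    · simpa [Ideal.ofList, Set.insert_def] using c5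
  · intro htop
    rw [smul_eq_mul, Ideal.mul_top] at htop
    have hle : Ideal.ofList [e1^2, e2, e3, v] ≤
        RingHom.ker (eval (fun _ => (0 : k)) : MvPolynomial (Fin 4) k →+* k) := by
      rw [Ideal.ofList, Ideal.span_le]
      intro r hr
      simp only [List.mem_cons, List.not_mem_nil, or_false, Set.mem_ofPred_eq] at hr
      rw [SetLike.mem_coe, RingHom.mem_ker]
      rcases hr with rfl | rfl | rfl | rfl
      · rw [q1]; simp
      · rw [q2]; simp
      · rw [q3]; simp
      · rw [hv]; simp
    rw [← htop] at hle
    have h1 := hle (Submodule.mem_top (x := 1))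
    simp [RingHom.mem_ker] at h1
end
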